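/- Let {λ_i}_{i=1}^∞ be a sequence of distinct points in 𝔻². The sequence is interpolating for H^∞(𝔻²) (for every bounded complex sequence {w_i} there is a bounded analytic φ on 𝔻² with φ(λ_i) = w_i for all i) if and only if there exist constants M > 0 and N > 0 such that for every admissible kernel k on 𝔻² with k(λ_i,λ_i) > 0 for all i, the normalized Grammian G^k, with entries G^k_{ij} = k(λ_i,λ_j)/√(k(λ_i,λ_i) k(λ_j,λ_j)), satisfies (1/N) ∑_i |a_i|² ≤ ∑_{i,j} a_i ā_j G^k_{ij} ≤ M ∑_i |a_i|² for every finitely supported complex sequence {a_i}. -/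

import Mathlib

open Finset
open scoped ComplexOrder

/-- The open bidisk in `ℂ × ℂ`. -/
def Bidisk : Set (ℂ × ℂ) := {lam : ℂ × ℂ | ‖lam.1‖ < 1 ∧ ‖lam.2‖ < 1}

/-- A kernel on the bidisk is positive semi-definite if all its finite Gram sums over
points of `𝔻²` are nonnegative. -/
def IsPSDKernel (k : ℂ × ℂ → ℂ × ℂ → ℂ) : Prop :=
  ∀ (n : ℕ) (mu : Fin n → ℂ × ℂ), (∀ i, mu i ∈ Bidisk) → ∀ a : Fin n → ℂ,
    0 ≤ ∑ i, ∑ j, a i * starRingEnd ℂ (a j) * k (mu i) (mu j)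

/-- A kernel `k` on `𝔻²` is admissible if `k` and both kernels
`(ζ,λ) ↦ (1 - ζʳ λ̄ʳ) k(ζ,λ)`, `r = 1, 2`, are positive semi-definite. -/
def IsAdmissibleKernel (k : ℂ × ℂ → ℂ × ℂ → ℂ) : Prop :=
  IsPSDKernel k ∧
  IsPSDKernel (fun zeta lam => (1 - zeta.1 * starRingEnd ℂ lam.1) * k zeta lam) ∧
  IsPSDKernel (fun zeta lam => (1 - zeta.2 * starRingEnd ℂ lam.2) * k zeta lam)

/-!
Suppose the Grammians are bounded. For `‖wᵢ‖ ≤ c` and every admissible matrix `K` at the points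
`λᵢ`, the two bounds give `∑ (M N c² - wᵢ w̄ⱼ) Kᵢⱼ ≥ 0`. By Hahn-Banach the matrix
`M N c² - wᵢ w̄ⱼ` then lies in the closed cone of all matrices
`(1 - λᵢ¹ λ̄ⱼ¹) Aᵢⱼ + (1 - λᵢ² λ̄ⱼ²) Bᵢⱼ` with `A` and `B` positive semidefinite, and a lurking
isometry turns such a decomposition into a transfer function that interpolates `w`.

Conversely, a von Neumann inequality shows that multiplication by the values of a bounded
analytic `φ` is bounded by `sup ‖φ‖` on the Gram vectors of every admissible kernel: for
polynomials through a commuting model of the two coordinate multiplications, in general by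
approximation. If the points are interpolating, uniform boundedness yields one constant for all
multipliers `‖wᵢ‖ ≤ 1`, and averaging over random signs makes the normalized Gram vectors
equivalent to an orthonormal family.
-/

open Filter Topology Matrix
open scoped ComplexConjugate InnerProductSpace

section PosSemidef

universe u

variable {X : Type u} {K : Matrix X X ℂ}

lemma isHermitian_of_sum_nonneg
    (h : ∀ (F : Finset X) (a : X → ℂ), 0 ≤ ∑ i ∈ F, ∑ j ∈ F, a i * conj (a j) * K i j) :
    K.IsHermitian := by
  classical
  have diag_im (i : X) : (K i i).im = 0 := by
    simpa using ((Complex.nonneg_iff.1 (h {i} 1)).2).symm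
  refine Matrix.ext fun i j => ?_
  obtain rfl | hij := eq_or_ne j i
  · exact Complex.conj_eq_iff_im.2 (diag_im j)
  -- The test vectors `(1, 1)` and `(1, i)` give the imaginary and the real part.
  have h_one := (Complex.nonneg_iff.1 (h {j, i} 1)).2
  have h_I := (Complex.nonneg_iff.1 (h {j, i} fun x => if x = j then 1 else Complex.I)).2
  simp only [Pi.one_apply, map_one, mul_one, one_mul, Finset.sum_pair hij, Complex.add_im, diag_im,
    zero_add, add_zero, ite_mul, ↓reduceIte, hij.symm, Complex.conj_I, neg_mul, mul_neg,
    Complex.I_mul_I, neg_neg, Complex.neg_im, Complex.mul_im, Complex.I_re, zero_mul,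
    Complex.I_im] at h_one h_I
  apply Complex.ext
  · simpa using by linarith
  · simpa using by linarith

lemma posSemidef_iff_sum_nonneg :
    K.PosSemidef ↔
      ∀ (F : Finset X) (a : X → ℂ), 0 ≤ ∑ i ∈ F, ∑ j ∈ F, a i * conj (a j) * K i j := by
  refine ⟨fun hK F a => ?_, fun h => ⟨isHermitian_of_sum_nonneg h, fun x => ?_⟩⟩
  · refine ((hK.submatrix ((↑) : F → X)).dotProduct_mulVec_nonneg
      fun i => conj (a i)).trans_eq ?_
    simp only [dotProduct, mulVec, submatrix_apply, Pi.star_apply, starRingEnd_apply, star_star,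
      Finset.mul_sum, ← Finset.sum_coe_sort F]
    exact Finset.sum_congr rfl fun i _ => Finset.sum_congr rfl fun j _ => by ring
  · refine (h x.support fun i => conj (x i)).trans_eq ?_
    refine Finset.sum_congr rfl fun i _ => Finset.sum_congr rfl fun j _ => ?_
    simp only [Complex.conj_conj, RCLike.star_def]
    ring

lemma isClosed_setOf_posSemidef : IsClosed {K : Matrix X X ℂ | K.PosSemidef} := by
  simp only [posSemidef_iff_sum_nonneg, Set.ofPred_forall]
  refine isClosed_iInter fun F => isClosed_iInter fun a => isClosed_le continuous_const ?_
  fun_prop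

lemma norm_sum_smul_sq {E : Type*} [NormedAddCommGroup E] [InnerProductSpace ℂ E] (v : X → E)
    (F : Finset X) (a : X → ℂ) :
    ((‖∑ i ∈ F, a i • v i‖ ^ 2 : ℝ) : ℂ) =
      ∑ i ∈ F, ∑ j ∈ F, a i * conj (a j) * ⟪v j, v i⟫_ℂ := by
  have := inner_self_eq_norm_sq_to_K (𝕜 := ℂ) (∑ i ∈ F, a i • v i)
  rw [Complex.ofReal_pow, ← Complex.coe_algebraMap, ← this, inner_sum]
  refine Finset.sum_congr rfl fun i _ => ?_
  rw [sum_inner]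
  refine Finset.sum_congr rfl fun j _ => ?_
  rw [inner_smul_left, inner_smul_right]
  ring

lemma exists_inner_eq_of_posSemidef (hK : K.PosSemidef) :
    ∃ (H : Type u) (_ : NormedAddCommGroup H) (_ : InnerProductSpace ℂ H) (_ : CompleteSpace H)
      (v : X → H), ∀ i j, ⟪v j, v i⟫_ℂ = K i j := by
  let M : Matrix X X (ℂ →L[ℂ] ℂ) := of fun i j => K j i • ContinuousLinearMap.id ℂ ℂ
  have hM : M.PosSemidef := by
    have key := (RKHS.posSemidef_tfae (K := M)).out 0 2
    refine key.2 ⟨?_, fun f => ?_⟩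
    · ext i j
      simp [M, Matrix.conjTranspose_apply, ContinuousLinearMap.star_eq_adjoint,
        ContinuousLinearMap.adjoint_id, ← hK.isHermitian.apply i j]
    · have := posSemidef_iff_sum_nonneg.1 hK f.support f
      simp only [Finsupp.sum, M]
      rw [Finset.sum_comm]
      refine (Complex.nonneg_iff.1 (this.trans_eq ?_)).1.trans_eq rfl
      refine Finset.sum_congr rfl fun i _ => Finset.sum_congr rfl fun j _ => ?_
      simp only [← hK.isHermitian.apply i j, RCLike.star_def, of_apply, _root_.smul_apply,
        ContinuousLinearMap.id_apply, smul_eq_mul, RCLike.inner_apply, map_mul]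
      ring
  have : Fact M.PosSemidef := ⟨hM⟩
  refine ⟨RKHS.OfKernel M, inferInstance, inferInstance, inferInstance,
    fun x => RKHS.kerFun (RKHS.OfKernel M) x (1 : ℂ), fun i j => ?_⟩
  rw [← RKHS.kernel_inner, RKHS.OfKernel.kernel_ofKernel]
  simp [M, ← hK.isHermitian.apply i j]

lemma norm_apply_le_of_posSemidef (hK : K.PosSemidef) (i j : X) :
    ‖K i j‖ ≤ (K i i).re + (K j j).re := by
  obtain ⟨H, _, _, _, v, hv⟩ := exists_inner_eq_of_posSemidef hK
  have diag (i : X) : (K i i).re = ‖v i‖ ^ 2 := by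
    rw [← hv, inner_self_eq_norm_sq_to_K]
    simp [← Complex.ofReal_pow]
  rw [diag, diag, ← hv]
  have := norm_inner_le_norm (𝕜 := ℂ) (v j) (v i)
  nlinarith [sq_nonneg (‖v i‖ - ‖v j‖), sq_nonneg (‖v i‖ + ‖v j‖)]

lemma exists_posSemidef_tendsto_of_diag_le {α : Type*} (u : Ultrafilter α) {A : α → Matrix X X ℂ}
    (hA : ∀ᶠ t in u, (A t).PosSemidef) {R : X → ℝ} (hR : ∀ i, ∀ᶠ t in u, (A t i i).re ≤ R i) :
    ∃ A₀ : Matrix X X ℂ, A₀.PosSemidef ∧ Tendsto A u (𝓝 A₀) := by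
  have entry_mem (i j : X) : ∀ᶠ t in u, A t i j ∈ Metric.closedBall 0 (R i + R j) := by
    filter_upwards [hA, hR i, hR j] with t ht hi hj
    exact mem_closedBall_zero_iff.2 ((norm_apply_le_of_posSemidef ht i j).trans (add_le_add hi hj))
  choose A₀ _ hA₀ using fun i j => (isCompact_closedBall (0 : ℂ) (R i + R j)).ultrafilter_le_nhds
    (u.map fun t => A t i j) (le_principal_iff.2 (entry_mem i j))
  have hlim : Tendsto A u (𝓝 (of A₀)) :=
    tendsto_pi_nhds.2 fun i => tendsto_pi_nhds.2 fun j => hA₀ i j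
  exact ⟨of A₀, isClosed_setOf_posSemidef.mem_of_tendsto hlim hA, hlim⟩

end PosSemidef

section AglerCone

variable {X : Type*}

/-- The entrywise inverse `1 - zᵢ z̄ⱼ` of the Szegő kernel at the points `zᵢ`. -/
def szegoInv (z : X → ℂ) : Matrix X X ℂ := of fun i j => 1 - z i * conj (z j)

@[simp]
lemma szegoInv_apply (z : X → ℂ) (i j : X) : szegoInv z i j = 1 - z i * conj (z j) := rfl

lemma szegoInv_apply_self (z : X → ℂ) (i : X) : szegoInv z i i = ((1 - ‖z i‖ ^ 2 : ℝ) : ℂ) := by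
  rw [szegoInv_apply, Complex.mul_conj, Complex.normSq_eq_norm_sq]
  push_cast
  rfl

lemma isHermitian_szegoInv (z : X → ℂ) : (szegoInv z).IsHermitian :=
  Matrix.ext fun i j => by simp [mul_comm]

lemma posSemidef_mul_conj (a : X → ℂ) : (of fun i j => a i * conj (a j)).PosSemidef := by
  refine posSemidef_iff_sum_nonneg.2 fun F b => ?_
  have := norm_sum_smul_sq a F b
  simp only [RCLike.inner_apply] at this
  exact (Complex.zero_le_real.2 (sq_nonneg ‖∑ i ∈ F, b i • a i‖)).trans_eq this

lemma posSemidef_of_szegoInv_hadamard {z : X → ℂ} (hz : ∀ i, ‖z i‖ < 1) {K : Matrix X X ℂ}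
    (h : (szegoInv z ⊙ K).PosSemidef) : K.PosSemidef := by
  -- Multiply by the partial sums of the Szegő kernel `∑ zᵢⁿ z̄ⱼⁿ`.
  let S (m : ℕ) : Matrix X X ℂ := ∑ n ∈ Finset.range m, of fun i j => z i ^ n * conj (z j ^ n)
  have hS (m : ℕ) : (S m ⊙ (szegoInv z ⊙ K)).PosSemidef :=
    (posSemidef_sum _ fun n _ => posSemidef_mul_conj fun i => z i ^ n).hadamard h
  suffices hlim : Tendsto (fun m => S m ⊙ (szegoInv z ⊙ K)) atTop (𝓝 K) from
    isClosed_setOf_posSemidef.mem_of_tendsto hlim (.of_forall hS)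
  refine tendsto_pi_nhds.2 fun i => tendsto_pi_nhds.2 fun j => ?_
  have hpow : Tendsto (fun m : ℕ => (z i * conj (z j)) ^ m) atTop (𝓝 0) := by
    refine tendsto_pow_atTop_nhds_zero_of_norm_lt_one ?_
    rw [norm_mul, RCLike.norm_conj]
    exact mul_lt_one_of_nonneg_of_lt_one_left (norm_nonneg _) (hz i) (hz j).le
  have hlim := (hpow.const_sub 1).mul_const (K i j)
  rw [sub_zero, one_mul] at hlim
  refine hlim.congr fun m => ?_
  simp only [S, hadamard_apply, Matrix.sum_apply, of_apply, map_pow, ← mul_pow, szegoInv_apply]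
  rw [← mul_assoc, geom_sum_mul_neg]

/-- The finite analogue of an admissible kernel: a matrix indexed by points `lam i` of the bidisk
on which multiplication by either coordinate is contractive. -/
def IsAdmissibleMatrix (lam : X → ℂ × ℂ) (K : Matrix X X ℂ) : Prop :=
  (szegoInv (fun i => (lam i).1) ⊙ K).PosSemidef ∧ (szegoInv (fun i => (lam i).2) ⊙ K).PosSemidef

/-- The cone of matrices `(1 - zᵢ z̄ⱼ) Aᵢⱼ + (1 - wᵢ w̄ⱼ) Bᵢⱼ` with `A` and `B` positive
semi-definite, where `(zᵢ, wᵢ) = lam i`. -/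
def aglerCone (lam : X → ℂ × ℂ) : PointedCone ℝ (Matrix X X ℂ) where
  carrier := {Y | ∃ A B : Matrix X X ℂ, A.PosSemidef ∧ B.PosSemidef ∧
    Y = szegoInv (fun i => (lam i).1) ⊙ A + szegoInv (fun i => (lam i).2) ⊙ B}
  zero_mem' := ⟨0, 0, .zero, .zero, by simp⟩
  add_mem' := by
    rintro _ _ ⟨A, B, hA, hB, rfl⟩ ⟨A', B', hA', hB', rfl⟩
    exact ⟨A + A', B + B', hA.add hA', hB.add hB', by simp only [hadamard_add]; abel⟩
  smul_mem' := by
    rintro c _ ⟨A, B, hA, hB, rfl⟩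
    exact ⟨c • A, c • B, hA.smul c.2, hB.smul c.2, by simp only [hadamard_smul, smul_add]⟩

variable {lam : X → ℂ × ℂ}

lemma mem_aglerCone {Y : Matrix X X ℂ} :
    Y ∈ aglerCone lam ↔ ∃ A B : Matrix X X ℂ, A.PosSemidef ∧ B.PosSemidef ∧
      Y = szegoInv (fun i => (lam i).1) ⊙ A + szegoInv (fun i => (lam i).2) ⊙ B :=
  Iff.rfl

lemma re_apply_self_le_of_szegoInv {z w : X → ℂ} {A B : Matrix X X ℂ} (hB : B.PosSemidef) {i : X}
    (hz : ‖z i‖ < 1) (hw : ‖w i‖ < 1) :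
    (A i i).re ≤ ((szegoInv z ⊙ A + szegoInv w ⊙ B) i i).re / (1 - ‖z i‖ ^ 2) := by
  have hz' : 0 < 1 - ‖z i‖ ^ 2 := sub_pos.2 (pow_lt_one₀ (norm_nonneg _) hz two_ne_zero)
  have hw' : 0 < 1 - ‖w i‖ ^ 2 := sub_pos.2 (pow_lt_one₀ (norm_nonneg _) hw two_ne_zero)
  have hB' := (Complex.nonneg_iff.1 (hB.diag_nonneg (i := i))).1
  rw [le_div_iff₀ hz', Matrix.add_apply, hadamard_apply, hadamard_apply, szegoInv_apply_self,
    szegoInv_apply_self, Complex.add_re, Complex.re_ofReal_mul, Complex.re_ofReal_mul]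
  nlinarith

lemma exists_posSemidef_tendsto_of_szegoInv {z w : X → ℂ} (hz : ∀ i, ‖z i‖ < 1)
    (hw : ∀ i, ‖w i‖ < 1) {α : Type*} {u : Ultrafilter α} {A B : α → Matrix X X ℂ}
    (hA : ∀ᶠ t in u, (A t).PosSemidef) (hB : ∀ᶠ t in u, (B t).PosSemidef) {Y : Matrix X X ℂ}
    (hY : Tendsto (fun t => szegoInv z ⊙ A t + szegoInv w ⊙ B t) u (𝓝 Y)) :
    ∃ A₀ : Matrix X X ℂ, A₀.PosSemidef ∧ Tendsto A u (𝓝 A₀) := by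
  refine exists_posSemidef_tendsto_of_diag_le u hA
    (R := fun i => ((Y i i).re + 1) / (1 - ‖z i‖ ^ 2)) fun i => ?_
  have diag_le : ∀ᶠ t in u, ((szegoInv z ⊙ A t + szegoInv w ⊙ B t) i i).re < (Y i i).re + 1 :=
    ((Complex.continuous_re.tendsto _).comp ((hY.apply_nhds i).apply_nhds i)).eventually_lt_const
      (lt_add_one _)
  filter_upwards [hB, diag_le] with t hBt ht
  refine (re_apply_self_le_of_szegoInv hBt (hz i) (hw i)).trans ?_
  gcongr
  exact sub_nonneg.2 (pow_le_one₀ (norm_nonneg _) (hz i).le)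

lemma isClosed_aglerCone (hlam : ∀ i, lam i ∈ Bidisk) :
    IsClosed (aglerCone lam : Set (Matrix X X ℂ)) := by
  refine isClosed_of_closure_subset fun Y hY => ?_
  let s₁ := szegoInv fun i => (lam i).1
  let s₂ := szegoInv fun i => (lam i).2
  have image_eq : (aglerCone lam : Set (Matrix X X ℂ)) =
      (fun P : Matrix X X ℂ × Matrix X X ℂ => s₁ ⊙ P.1 + s₂ ⊙ P.2) ''
        {P | P.1.PosSemidef ∧ P.2.PosSemidef} := by
    ext Y
    simp [mem_aglerCone, and_assoc, eq_comm, s₁, s₂]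
  rw [image_eq, mem_closure_iff_clusterPt, ← map_principal] at hY
  obtain ⟨u, hu, hlim⟩ := mapClusterPt_iff_ultrafilter.1 hY
  obtain ⟨hA, hB⟩ := eventually_and.1 (le_principal_iff.1 hu)
  obtain ⟨A, hA₀, hlimA⟩ := exists_posSemidef_tendsto_of_szegoInv (fun i => (hlam i).1)
    (fun i => (hlam i).2) hA hB hlim
  obtain ⟨B, hB₀, hlimB⟩ := exists_posSemidef_tendsto_of_szegoInv (fun i => (hlam i).2)
    (fun i => (hlam i).1) hB hA (by simpa only [add_comm] using hlim)
  have hcont : Continuous fun P : Matrix X X ℂ × Matrix X X ℂ => s₁ ⊙ P.1 + s₂ ⊙ P.2 :=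
    continuous_matrix fun i j => by simp only [Matrix.add_apply, hadamard_apply]; fun_prop
  refine ⟨A, B, hA₀, hB₀, tendsto_nhds_unique hlim ?_⟩
  exact (hcont.tendsto (A, B)).comp (hlimA.prodMk_nhds hlimB)

open Classical in
/-- The matrix obtained from `Γ` by replacing all entries outside `F × F` by zero. -/
noncomputable def truncation (F : Finset X) (Γ : Matrix X X ℂ) : Matrix X X ℂ :=
  of fun i j => if i ∈ F ∧ j ∈ F then Γ i j else 0

lemma tendsto_truncation (Γ : Matrix X X ℂ) :
    Tendsto (fun F => truncation F Γ) atTop (𝓝 Γ) := by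
  classical
  refine tendsto_pi_nhds.2 fun i => tendsto_pi_nhds.2 fun j => tendsto_const_nhds.congr' ?_
  filter_upwards [eventually_ge_atTop {i, j}] with F hF
  have hmem : i ∈ F ∧ j ∈ F := by simpa [Finset.insert_subset_iff] using hF
  exact (if_pos hmem).symm

lemma hadamard_truncation (F : Finset X) (A B : Matrix X X ℂ) :
    A ⊙ truncation F B = truncation F (A ⊙ B) := by
  ext i j
  simp [truncation]

lemma posSemidef_truncation_mul_conj (F : Finset X) (a : X → ℂ) :
    (truncation F (of fun i j => a i * conj (a j))).PosSemidef := by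
  classical
  convert posSemidef_mul_conj fun i => if i ∈ F then a i else 0 using 1
  ext i j
  by_cases hi : i ∈ F <;> by_cases hj : j ∈ F <;> simp [truncation, hi, hj]

open Classical in
/-- The Hermitian matrix that represents the real functional `f` on finitely supported Hermitian
matrices through the pairing `∑ Γᵢⱼ Kᵢⱼ`. -/
noncomputable def dualMatrix (f : StrongDual ℝ (Matrix X X ℂ)) : Matrix X X ℂ :=
  of fun i j => (f.extendRCLike (𝕜 := ℂ) (Matrix.single i j 1) +
    conj (f.extendRCLike (𝕜 := ℂ) (Matrix.single j i 1))) / 2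

lemma truncation_eq_sum_single [DecidableEq X] (F : Finset X) (Γ : Matrix X X ℂ) :
    truncation F Γ = ∑ i ∈ F, ∑ j ∈ F, Γ i j • Matrix.single i j 1 := by
  ext i j
  by_cases hi : i ∈ F <;> by_cases hj : j ∈ F <;>
    simp [truncation, Matrix.sum_apply, Matrix.single_apply, ite_and, hi, hj]

lemma sum_mul_dualMatrix (f : StrongDual ℝ (Matrix X X ℂ)) {Γ : Matrix X X ℂ}
    (hΓ : Γ.IsHermitian) (F : Finset X) :
    ∑ i ∈ F, ∑ j ∈ F, Γ i j * dualMatrix f i j = f (truncation F Γ) := by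
  classical
  set g := f.extendRCLike (𝕜 := ℂ) with hg
  have g_truncation : g (truncation F Γ) = ∑ i ∈ F, ∑ j ∈ F, Γ i j * g (Matrix.single i j 1) := by
    simp only [truncation_eq_sum_single, map_sum, map_smul, smul_eq_mul]
  have conj_g_truncation : conj (g (truncation F Γ)) =
      ∑ i ∈ F, ∑ j ∈ F, Γ i j * conj (g (Matrix.single j i 1)) := by
    rw [g_truncation, Finset.sum_comm]
    have conj_apply (i j : X) : conj (Γ j i) = Γ i j := hΓ.apply i j
    simp only [map_sum, map_mul, conj_apply]
  have re_g : (g (truncation F Γ)).re = f (truncation F Γ) :=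
    StrongDual.re_extendRCLike_apply (𝕜 := ℂ) f _
  rw [← re_g, Complex.re_eq_add_conj, conj_g_truncation, g_truncation, ← Finset.sum_add_distrib,
    Finset.sum_div]
  refine Finset.sum_congr rfl fun i _ => ?_
  rw [← Finset.sum_add_distrib, Finset.sum_div]
  refine Finset.sum_congr rfl fun j _ => ?_
  simp only [dualMatrix, of_apply, ← hg]
  ring

lemma posSemidef_hadamard_dualMatrix {f : StrongDual ℝ (Matrix X X ℂ)} {S : Matrix X X ℂ}
    (hS : S.IsHermitian) (hf : ∀ A : Matrix X X ℂ, A.PosSemidef → 0 ≤ f (S ⊙ A)) :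
    (S ⊙ dualMatrix f).PosSemidef := by
  refine posSemidef_iff_sum_nonneg.2 fun F a => ?_
  have h := Complex.zero_le_real.2 (hf _ (posSemidef_truncation_mul_conj F a))
  rw [hadamard_truncation,
    ← sum_mul_dualMatrix f (hS.hadamard (posSemidef_mul_conj a).isHermitian)] at h
  refine h.trans_eq (Finset.sum_congr rfl fun i _ => Finset.sum_congr rfl fun j _ => ?_)
  simp only [hadamard_apply, of_apply]
  ring

lemma szegoInv_hadamard_one [DecidableEq X] {z : X → ℂ} (hz : ∀ i, ‖z i‖ < 1) :
    (szegoInv z ⊙ 1).PosSemidef := by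
  rw [hadamard_one]
  refine .diagonal fun i => ?_
  rw [diag_apply, szegoInv_apply_self]
  exact Complex.zero_le_real.2 (sub_nonneg.2 (pow_le_one₀ (norm_nonneg _) (hz i).le))

lemma isAdmissibleMatrix_one [DecidableEq X] (hlam : ∀ i, lam i ∈ Bidisk) :
    IsAdmissibleMatrix lam 1 :=
  ⟨szegoInv_hadamard_one fun i => (hlam i).1, szegoInv_hadamard_one fun i => (hlam i).2⟩

lemma IsAdmissibleMatrix.add_smul_one [DecidableEq X] (hlam : ∀ i, lam i ∈ Bidisk)
    {K : Matrix X X ℂ} (hK : IsAdmissibleMatrix lam K) {ε : ℝ} (hε : 0 ≤ ε) :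
    IsAdmissibleMatrix lam (K + ε • 1) := by
  unfold IsAdmissibleMatrix
  simp only [hadamard_add, hadamard_smul]
  exact ⟨hK.1.add ((isAdmissibleMatrix_one hlam).1.smul hε),
    hK.2.add ((isAdmissibleMatrix_one hlam).2.smul hε)⟩

lemma IsAdmissibleMatrix.posSemidef (hlam : ∀ i, lam i ∈ Bidisk) {K : Matrix X X ℂ}
    (hK : IsAdmissibleMatrix lam K) : K.PosSemidef :=
  posSemidef_of_szegoInv_hadamard (fun i => (hlam i).1) hK.1

-- The cone is closed, so otherwise a functional separates `Γ` from it; its matrix is admissible.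
theorem mem_aglerCone_of_sum_nonneg (hlam : ∀ i, lam i ∈ Bidisk) {Γ : Matrix X X ℂ}
    (hΓ : Γ.IsHermitian)
    (h : ∀ K : Matrix X X ℂ, IsAdmissibleMatrix lam K → (∀ i, 0 < K i i) → ∀ F : Finset X,
      0 ≤ ∑ i ∈ F, ∑ j ∈ F, Γ i j * K i j) :
    Γ ∈ aglerCone lam := by
  classical
  by_contra hmem
  have : LocallyConvexSpace ℝ (Matrix X X ℂ) := inferInstanceAs (LocallyConvexSpace ℝ (X → X → ℂ))
  let C : ProperCone ℝ (Matrix X X ℂ) := ⟨aglerCone lam, isClosed_aglerCone hlam⟩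
  obtain ⟨f, hf, hfΓ⟩ := C.hyperplane_separation_point (x₀ := Γ) hmem
  have hK : IsAdmissibleMatrix lam (dualMatrix f) :=
    ⟨posSemidef_hadamard_dualMatrix (isHermitian_szegoInv _) fun A hA =>
        hf _ (mem_aglerCone.2 ⟨A, 0, hA, .zero, by simp⟩),
      posSemidef_hadamard_dualMatrix (isHermitian_szegoInv _) fun B hB =>
        hf _ (mem_aglerCone.2 ⟨0, B, .zero, hB, by simp⟩)⟩
  obtain ⟨F, hF⟩ : ∃ F, f (truncation F Γ) < 0 :=
    (((map_continuous f).tendsto Γ).comp (tendsto_truncation Γ)).eventually_lt_const hfΓ |>.exists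
  have perturbed (ε : ℝ) (hε : 0 < ε) :
      0 ≤ (f (truncation F Γ) : ℂ) + ε * ∑ i ∈ F, Γ i i := by
    refine (h _ (hK.add_smul_one hlam hε.le) (fun i => ?_) F).trans_eq ?_
    · simpa using add_pos_of_nonneg_of_pos (hK.posSemidef hlam).diag_nonneg
        (Complex.zero_lt_real.2 hε)
    · rw [← sum_mul_dualMatrix f hΓ]
      simp [mul_add, Finset.sum_add_distrib, Matrix.one_apply, Finset.mul_sum, mul_comm]
  have hlim : Tendsto (fun ε : ℝ => (f (truncation F Γ) : ℂ) + ε * ∑ i ∈ F, Γ i i) (𝓝[>] 0)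
      (𝓝 ((f (truncation F Γ) : ℂ) + (0 : ℝ) * ∑ i ∈ F, Γ i i)) :=
    (Continuous.tendsto (by fun_prop) 0).mono_left nhdsWithin_le_nhds
  have := ge_of_tendsto hlim (eventually_mem_nhdsWithin.mono perturbed)
  simp only [Complex.ofReal_zero, zero_mul, add_zero, Complex.zero_le_real] at this
  exact this.not_gt hF

end AglerCone

section AdmissibleKernel

variable {X : Type*} {lam : X → ℂ × ℂ}

lemma IsPSDKernel.posSemidef {k : ℂ × ℂ → ℂ × ℂ → ℂ} (hk : IsPSDKernel k)
    (hlam : ∀ i, lam i ∈ Bidisk) : (of fun i j => k (lam i) (lam j)).PosSemidef := by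
  refine posSemidef_iff_sum_nonneg.2 fun F a => ?_
  let e := F.equivFin.symm
  refine (hk F.card (fun n => lam (e n)) (fun n => hlam _) fun n => a (e n)).trans_eq ?_
  simp only [← Finset.sum_coe_sort F, of_apply]
  rw [← e.sum_comp]
  exact Finset.sum_congr rfl fun n _ =>
    e.sum_comp fun j : F => a (e n) * conj (a j) * k (lam (e n)) (lam j)

lemma IsPSDKernel.of_posSemidef {k : Matrix (ℂ × ℂ) (ℂ × ℂ) ℂ} (hk : k.PosSemidef) :
    IsPSDKernel k := fun _ mu _ =>
  posSemidef_iff_sum_nonneg.1 (hk.submatrix mu) Finset.univ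

lemma IsAdmissibleKernel.isAdmissibleMatrix {k : ℂ × ℂ → ℂ × ℂ → ℂ} (hk : IsAdmissibleKernel k)
    (hlam : ∀ i, lam i ∈ Bidisk) : IsAdmissibleMatrix lam (of fun i j => k (lam i) (lam j)) :=
  ⟨hk.2.1.posSemidef hlam, hk.2.2.posSemidef hlam⟩

open Classical in
/-- The kernel equal to `K i j` at `(lam i, lam j)` and zero away from the points `lam i`. -/
noncomputable def extendedKernel [Nonempty X] (lam : X → ℂ × ℂ) (K : Matrix X X ℂ) :
    Matrix (ℂ × ℂ) (ℂ × ℂ) ℂ :=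
  (of fun z w => (Set.range lam).indicator 1 z * conj ((Set.range lam).indicator 1 w)) ⊙
    K.submatrix (Function.invFun lam) (Function.invFun lam)

lemma extendedKernel_apply [Nonempty X] (hinj : Function.Injective lam) (K : Matrix X X ℂ)
    (i j : X) : extendedKernel lam K (lam i) (lam j) = K i j := by
  simp [extendedKernel, Function.leftInverse_invFun hinj _]

lemma posSemidef_extendedKernel [Nonempty X] {K : Matrix X X ℂ} (hK : K.PosSemidef) :
    (extendedKernel lam K).PosSemidef :=
  (posSemidef_mul_conj _).hadamard (hK.submatrix _)

lemma szegoInv_hadamard_extendedKernel [Nonempty X] (c : ℂ × ℂ → ℂ) (K : Matrix X X ℂ) :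
    szegoInv c ⊙ extendedKernel lam K =
      extendedKernel lam (szegoInv (fun i => c (lam i)) ⊙ K) := by
  ext z w
  by_cases hz : z ∈ Set.range lam
  · by_cases hw : w ∈ Set.range lam
    · simp [extendedKernel, hz, hw, Function.invFun_eq hz, Function.invFun_eq hw]
    · simp [extendedKernel, hw]
  · simp [extendedKernel, hz]

lemma IsAdmissibleMatrix.isAdmissibleKernel_extendedKernel [Nonempty X]
    (hlam : ∀ i, lam i ∈ Bidisk) {K : Matrix X X ℂ} (hK : IsAdmissibleMatrix lam K) :
    IsAdmissibleKernel (extendedKernel lam K) := by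
  refine ⟨.of_posSemidef (posSemidef_extendedKernel (hK.posSemidef hlam)), ?_, ?_⟩
  · refine .of_posSemidef (k := szegoInv Prod.fst ⊙ extendedKernel lam K) ?_
    rw [szegoInv_hadamard_extendedKernel]
    exact posSemidef_extendedKernel hK.1
  · refine .of_posSemidef (k := szegoInv Prod.snd ⊙ extendedKernel lam K) ?_
    rw [szegoInv_hadamard_extendedKernel]
    exact posSemidef_extendedKernel hK.2

/-- The points `lam i` are interpolating for `H^∞(𝔻²)`. -/
def IsInterpolating (lam : X → ℂ × ℂ) : Prop :=
  ∀ w : X → ℂ, (∃ Cw : ℝ, ∀ i, ‖w i‖ ≤ Cw) →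
    ∃ φ : ℂ × ℂ → ℂ, DifferentiableOn ℂ φ Bidisk ∧
      (∃ Cφ : ℝ, ∀ z ∈ Bidisk, ‖φ z‖ ≤ Cφ) ∧
      ∀ i, φ (lam i) = w i

/-- The quadratic form `∑ aᵢ āⱼ Gᵢⱼ` over `F` of the normalization `G` of the matrix `K`. -/
noncomputable def normalizedForm (K : Matrix X X ℂ) (F : Finset X) (a : X → ℂ) : ℂ :=
  ∑ i ∈ F, ∑ j ∈ F, a i * conj (a j) * (K i j / (Real.sqrt ((K i i).re * (K j j).re) : ℂ))

/-- The normalized Grammians of all admissible kernels at the points `lam i` are uniformly bounded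
above by `M` and below by `1 / N`. -/
def GrammiansBounded (lam : X → ℂ × ℂ) (M N : ℝ) : Prop :=
  ∀ k : ℂ × ℂ → ℂ × ℂ → ℂ, IsAdmissibleKernel k → (∀ i, 0 < k (lam i) (lam i)) →
    ∀ (F : Finset X) (a : X → ℂ),
      (((1 / N) * ∑ i ∈ F, ‖a i‖ ^ 2 : ℝ) : ℂ) ≤
          normalizedForm (of fun i j => k (lam i) (lam j)) F a ∧
        normalizedForm (of fun i j => k (lam i) (lam j)) F a ≤ ((M * ∑ i ∈ F, ‖a i‖ ^ 2 : ℝ) : ℂ)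

lemma normalizedForm_eq {K : Matrix X X ℂ} (hK : ∀ i, 0 ≤ K i i) (F : Finset X) (a : X → ℂ) :
    normalizedForm K F a = ∑ i ∈ F, ∑ j ∈ F,
      a i / (√(K i i).re : ℂ) * conj (a j / (√(K j j).re : ℂ)) * K i j := by
  refine Finset.sum_congr rfl fun i _ => Finset.sum_congr rfl fun j _ => ?_
  rw [Real.sqrt_mul (Complex.nonneg_iff.1 (hK i)).1, map_div₀, Complex.conj_ofReal]
  push_cast
  ring

end AdmissibleKernel

section LurkingIsometry

variable {X E F : Type*} [NormedAddCommGroup E] [InnerProductSpace ℂ E] [NormedAddCommGroup F]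
  [InnerProductSpace ℂ F] {x : X → E} {y : X → F}

lemma norm_linearCombination_eq_of_inner_eq (h : ∀ i j, ⟪x i, x j⟫_ℂ = ⟪y i, y j⟫_ℂ)
    (f : X →₀ ℂ) : ‖Finsupp.linearCombination ℂ x f‖ = ‖Finsupp.linearCombination ℂ y f‖ := by
  rw [← sq_eq_sq₀ (norm_nonneg _) (norm_nonneg _), ← Complex.ofReal_inj]
  simp only [Finsupp.linearCombination_apply, Finsupp.sum, norm_sum_smul_sq, h]

lemma exists_linearIsometry_span_of_inner_eq (h : ∀ i j, ⟪x i, x j⟫_ℂ = ⟪y i, y j⟫_ℂ) :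
    ∃ L : Submodule.span ℂ (Set.range x) →ₗᵢ[ℂ] F,
      ∀ i (hi : x i ∈ Submodule.span ℂ (Set.range x)), L ⟨x i, hi⟩ = y i := by
  let P := Finsupp.linearCombination ℂ x
  let Q := Finsupp.linearCombination ℂ y
  have norm_P (f : X →₀ ℂ) : ‖P f‖ = ‖Q f‖ := norm_linearCombination_eq_of_inner_eq h f
  have ker_le : LinearMap.ker P ≤ LinearMap.ker Q := fun f hf => by
    rw [LinearMap.mem_ker, ← norm_eq_zero] at hf ⊢
    rwa [← norm_P]
  let L₀ := (LinearMap.ker P).liftQ Q ker_le ∘ₗ P.quotKerEquivRange.symm.toLinearMap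
  have L₀_apply (f : X →₀ ℂ) : L₀ ⟨P f, P.mem_range_self f⟩ = Q f := by
    simp only [L₀, LinearMap.comp_apply, LinearEquiv.coe_coe,
      LinearMap.quotKerEquivRange_symm_apply_image, Submodule.mkQ_apply, Submodule.liftQ_apply]
  let L : LinearMap.range P →ₗᵢ[ℂ] F := ⟨L₀, by
    rintro ⟨_, f, rfl⟩
    rw [L₀_apply]
    exact (norm_P f).symm⟩
  rw [← Finsupp.range_linearCombination]
  refine ⟨L, fun i _ => ?_⟩
  have := L₀_apply (Finsupp.single i 1)
  simp only [P, Q, Finsupp.linearCombination_single, one_smul] at this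
  exact this

lemma exists_contraction_of_inner_eq [CompleteSpace E] [CompleteSpace F]
    (h : ∀ i j, ⟪x i, x j⟫_ℂ = ⟪y i, y j⟫_ℂ) :
    ∃ T : E →L[ℂ] F, (∀ v, ‖T v‖ ≤ ‖v‖) ∧ ∀ i, T (x i) = y i := by
  obtain ⟨L, hL⟩ := exists_linearIsometry_span_of_inner_eq h
  let S := (Submodule.span ℂ (Set.range x)).topologicalClosure
  have hS : Submodule.span ℂ (Set.range x) ≤ S := Submodule.le_topologicalClosure _
  have : CompleteSpace S := (Submodule.isClosed_topologicalClosure _).completeSpace_coe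
  let e := Submodule.inclusion hS
  have dense_e : DenseRange e := (denseRange_inclusion_iff hS).2 subset_rfl
  have norm_e (v : Submodule.span ℂ (Set.range x)) : ‖L.toLinearMap v‖ ≤ 1 * ‖e v‖ := by
    rw [one_mul]
    exact (L.norm_map v).le
  refine ⟨(L.toLinearMap.extendOfNorm e).comp S.orthogonalProjectionOnto, fun v => ?_, fun i => ?_⟩
  · calc
      _ ≤ 1 * ‖S.orthogonalProjectionOnto v‖ :=
        LinearMap.norm_extendOfNorm_apply_le dense_e 1 norm_e _
      _ ≤ ‖v‖ := by rw [one_mul]; exact S.norm_orthogonalProjectionOnto_apply_le v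
  · let xi : Submodule.span ℂ (Set.range x) := ⟨x i, Submodule.subset_span ⟨i, rfl⟩⟩
    have proj_x : S.orthogonalProjectionOnto (x i) = e xi :=
      S.orthogonalProjectionOnto_mem_subspace_eq_self (e xi)
    rw [ContinuousLinearMap.comp_apply, proj_x, LinearMap.extendOfNorm_eq dense_e ⟨1, norm_e⟩]
    exact hL i _

lemma exists_unitary_apply_eq_of_inner_eq [FiniteDimensional ℂ E] [CompleteSpace E] {x y : X → E}
    (h : ∀ i j, ⟪x i, x j⟫_ℂ = ⟪y i, y j⟫_ℂ) :
    ∃ U ∈ unitary (E →L[ℂ] E), ∀ i, U (x i) = y i ∧ star U (y i) = x i := by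
  obtain ⟨L, hL⟩ := exists_linearIsometry_span_of_inner_eq h
  let U := Unitary.linearIsometryEquiv.symm (L.extend.toLinearIsometryEquiv rfl)
  have U_apply (i : X) : (U : E →L[ℂ] E) (x i) = y i :=
    (L.extend_apply _).trans (hL i (Submodule.subset_span ⟨i, rfl⟩))
  refine ⟨U, U.2, fun i => ⟨U_apply i, ?_⟩⟩
  rw [← U_apply]
  exact DFunLike.congr_fun U.2.1 (x i)

end LurkingIsometry

section TransferFunction

variable {H : Type*} [NormedAddCommGroup H] [InnerProductSpace ℂ H] [CompleteSpace H]

/-- The internal state `(1 - DA)⁻¹ p` of a linear system with feedback operator `D` and input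
vector `p`, as a function of the operator variable `A`. -/
noncomputable def feedbackState (D : H →L[ℂ] H) (p : H) (A : H →L[ℂ] H) : H :=
  Ring.inverse (1 - D * A) p

/-- The transfer function `s + C A (1 - DA)⁻¹ p` of the linear system whose matrix, as an operator
on `ℂ ⊕ H`, has first column `(s, p)` and second column `(C, D)`. -/
noncomputable def transferFunction (s : ℂ) (C : H →L[ℂ] ℂ) (D : H →L[ℂ] H) (p : H)
    (A : H →L[ℂ] H) : ℂ :=
  s + C (A (feedbackState D p A))

variable {D : H →L[ℂ] H} (hD : ‖D‖ ≤ 1) (p : H) {A : H →L[ℂ] H} (hA : ‖A‖ < 1)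

include hD hA

lemma isUnit_one_sub_mul : IsUnit (1 - D * A) :=
  (Units.oneSub (D * A) ((norm_mul_le D A).trans_lt
    (mul_lt_one_of_nonneg_of_lt_one_right hD (norm_nonneg A) hA))).isUnit

lemma eq_feedbackState_iff {q : H} : q = feedbackState D p A ↔ q = p + D (A q) := by
  have hunit := isUnit_one_sub_mul hD hA
  rw [← sub_eq_iff_eq_add]
  change q = feedbackState D p A ↔ (1 - D * A) q = p
  constructor
  · rintro rfl
    exact DFunLike.congr_fun (Ring.mul_inverse_cancel _ hunit) p
  · rintro rfl
    exact (DFunLike.congr_fun (Ring.inverse_mul_cancel _ hunit) q).symm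

lemma norm_transferFunction_le {r : ℝ} (hr : 0 ≤ r) {s : ℂ} {C : H →L[ℂ] ℂ}
    (hcontr : ∀ u, ‖s + C u‖ ^ 2 + ‖p + D u‖ ^ 2 ≤ r ^ 2 + ‖u‖ ^ 2) :
    ‖transferFunction s C D p A‖ ≤ r := by
  set q := feedbackState D p A with hq
  have h := hcontr (A q)
  rw [← (eq_feedbackState_iff hD p hA).1 hq] at h
  have norm_Aq : ‖A q‖ ^ 2 ≤ ‖q‖ ^ 2 := by
    gcongr
    exact (A.le_of_opNorm_le hA.le q).trans_eq (one_mul _)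
  exact le_of_sq_le_sq (by change ‖s + C (A q)‖ ^ 2 ≤ r ^ 2; linarith) hr

lemma differentiableAt_transferFunction (s : ℂ) (C : H →L[ℂ] ℂ) :
    DifferentiableAt ℂ (transferFunction s C D p) A := by
  have inverse : DifferentiableAt ℂ (fun A : H →L[ℂ] H => Ring.inverse (1 - D * A)) A :=
    (differentiableAt_inverse (isUnit_one_sub_mul hD hA)).comp (f := fun A => 1 - D * A) A
      (by fun_prop)
  have state : DifferentiableAt ℂ (feedbackState D p) A := inverse.clm_apply (by fun_prop)
  exact (C.differentiableAt.comp A (differentiableAt_id.clm_apply state)).const_add s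

end TransferFunction

section LinearSystem

variable {X H : Type*} [NormedAddCommGroup H] [InnerProductSpace ℂ H] [CompleteSpace H]

lemma exists_contractive_system_of_inner_eq {r : ℝ} {w : X → ℂ} {x y : X → H}
    (h : ∀ i j, (r : ℂ) ^ 2 - w i * conj (w j) = ⟪y j, y i⟫_ℂ - ⟪x j, x i⟫_ℂ) :
    ∃ (s : ℂ) (C : H →L[ℂ] ℂ) (D : H →L[ℂ] H) (p : H), ‖D‖ ≤ 1 ∧
      (∀ u, ‖s + C u‖ ^ 2 + ‖p + D u‖ ^ 2 ≤ r ^ 2 + ‖u‖ ^ 2) ∧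
      ∀ i, w i = s + C (x i) ∧ y i = p + D (x i) := by
  obtain ⟨T, norm_T, hT⟩ := exists_contraction_of_inner_eq
    (E := WithLp 2 (ℂ × H)) (F := WithLp 2 (ℂ × H))
    (x := fun i => .toLp 2 (r, x i)) (y := fun i => .toLp 2 (w i, y i)) fun i j => by
      simp only [WithLp.prod_inner_apply, RCLike.inner_apply, Complex.conj_ofReal]
      linear_combination h j i
  let inclusion : H →L[ℂ] WithLp 2 (ℂ × H) :=
    (WithLp.prodContinuousLinearEquiv 2 ℂ ℂ H).symm ∘L .inr ℂ ℂ H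
  let b := T (.toLp 2 (r, 0))
  have T_apply (u : H) : T (.toLp 2 (r, u)) = b + T (inclusion u) := by
    rw [← map_add]
    congr 1
    apply WithLp.ofLp_injective
    simp [inclusion]
  have norm_sq_T_le (v : WithLp 2 (ℂ × H)) :
      ‖(T v).fst‖ ^ 2 + ‖(T v).snd‖ ^ 2 ≤ ‖v.fst‖ ^ 2 + ‖v.snd‖ ^ 2 := by
    rw [← WithLp.prod_norm_sq_eq_of_L2, ← WithLp.prod_norm_sq_eq_of_L2]
    gcongr
    exact norm_T v
  refine ⟨b.fst, WithLp.fstL 2 ℂ ℂ H ∘L T ∘L inclusion, WithLp.sndL 2 ℂ ℂ H ∘L T ∘L inclusion,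
    b.snd, ContinuousLinearMap.opNorm_le_bound _ zero_le_one fun u => ?_, fun u => ?_, fun i => ?_⟩
  · rw [one_mul]
    refine le_of_sq_le_sq ?_ (norm_nonneg u)
    calc
      _ ≤ ‖(T (inclusion u)).fst‖ ^ 2 + ‖(T (inclusion u)).snd‖ ^ 2 :=
        le_add_of_nonneg_left (sq_nonneg _)
      _ ≤ _ := norm_sq_T_le _
      _ = ‖u‖ ^ 2 := by simp [inclusion]
  · have := norm_sq_T_le (.toLp 2 (r, u))
    rw [T_apply] at this
    simpa using this
  · have := (hT i).symm.trans (T_apply (x i))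
    exact ⟨congrArg WithLp.fst this, congrArg WithLp.snd this⟩

end LinearSystem

section Realization

variable {H₁ H₂ : Type*} [NormedAddCommGroup H₁] [InnerProductSpace ℂ H₁]
  [NormedAddCommGroup H₂] [InnerProductSpace ℂ H₂]

/-- The operator `z.1 ⊕ z.2` on the Hilbert space direct sum of `H₁` and `H₂`. -/
noncomputable def coordinateOperator (z : ℂ × ℂ) : WithLp 2 (H₁ × H₂) →L[ℂ] WithLp 2 (H₁ × H₂) :=
  let e := WithLp.prodContinuousLinearEquiv 2 ℂ H₁ H₂
  z.1 • (e.symm ∘L .inl ℂ H₁ H₂ ∘L WithLp.fstL 2 ℂ H₁ H₂) +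
    z.2 • (e.symm ∘L .inr ℂ H₁ H₂ ∘L WithLp.sndL 2 ℂ H₁ H₂)

lemma coordinateOperator_apply (z : ℂ × ℂ) (u : WithLp 2 (H₁ × H₂)) :
    coordinateOperator z u = .toLp 2 (z.1 • u.fst, z.2 • u.snd) := by
  apply WithLp.ofLp_injective
  simp [coordinateOperator]

lemma differentiable_coordinateOperator {E : Type*} [NormedAddCommGroup E] [NormedSpace ℂ E]
    {f : E → ℂ × ℂ} (hf : Differentiable ℂ f) :
    Differentiable ℂ fun z => coordinateOperator (H₁ := H₁) (H₂ := H₂) (f z) := by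
  have differentiable_combo {H : Type _} [NormedAddCommGroup H] [NormedSpace ℂ H] (P Q : H) :
      Differentiable ℂ fun z => (f z).1 • P + (f z).2 • Q := by fun_prop
  exact differentiable_combo (H := WithLp 2 (H₁ × H₂) →L[ℂ] WithLp 2 (H₁ × H₂)) _ _

lemma norm_coordinateOperator_lt_one {z : ℂ × ℂ} (hz : z ∈ Bidisk) :
    ‖coordinateOperator (H₁ := H₁) (H₂ := H₂) z‖ < 1 := by
  refine lt_of_le_of_lt ?_ (max_lt hz.1 hz.2)
  refine ContinuousLinearMap.opNorm_le_bound _ (by positivity) fun u => ?_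
  refine le_of_sq_le_sq ?_ (by positivity)
  rw [coordinateOperator_apply, mul_pow, WithLp.prod_norm_sq_eq_of_L2,
    WithLp.prod_norm_sq_eq_of_L2 u, mul_add]
  simp only [WithLp.toLp_fst, WithLp.toLp_snd, norm_smul, mul_pow]
  gcongr
  · exact le_max_left _ _
  · exact le_max_right _ _

-- Gram vectors of the two summands of `c² - wᵢ w̄ⱼ` turn the cone identity into an equality of
-- inner products; the resulting contraction is the matrix of a linear system that produces `φ`.
theorem exists_bounded_interpolant_of_mem_aglerCone {X : Type*} {lam : X → ℂ × ℂ}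
    (hlam : ∀ i, lam i ∈ Bidisk) {w : X → ℂ} {c : ℝ} (hc : 0 ≤ c)
    (h : (of fun i j => (c : ℂ) ^ 2 - w i * conj (w j)) ∈ aglerCone lam) :
    ∃ φ : ℂ × ℂ → ℂ, DifferentiableOn ℂ φ Bidisk ∧ (∀ z ∈ Bidisk, ‖φ z‖ ≤ c) ∧
      ∀ i, φ (lam i) = w i := by
  obtain ⟨A, B, hA, hB, h_eq⟩ := mem_aglerCone.1 h
  obtain ⟨H₁, _, _, _, u, hu⟩ := exists_inner_eq_of_posSemidef hA
  obtain ⟨H₂, _, _, _, v, hv⟩ := exists_inner_eq_of_posSemidef hB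
  let q (i : X) : WithLp 2 (H₁ × H₂) := .toLp 2 (u i, v i)
  obtain ⟨s, C, D, p, hD, contractive, system⟩ := exists_contractive_system_of_inner_eq
    (r := c) (w := w) (x := fun i => coordinateOperator (lam i) (q i)) (y := q) fun i j => by
      have := congrFun₂ h_eq i j
      simp only [of_apply, Matrix.add_apply, hadamard_apply, szegoInv_apply, ← hu, ← hv] at this
      simp only [coordinateOperator_apply, q, WithLp.prod_inner_apply, WithLp.toLp_fst,
        WithLp.toLp_snd, inner_smul_left, inner_smul_right]
      linear_combination this
  refine ⟨fun z => transferFunction s C D p (coordinateOperator z), fun z hz => ?_,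
    fun z hz => ?_, fun i => ?_⟩
  · exact ((differentiableAt_transferFunction hD p (norm_coordinateOperator_lt_one hz) s C).comp z
      (differentiable_coordinateOperator differentiable_id z)).differentiableWithinAt
  · exact norm_transferFunction_le hD p (norm_coordinateOperator_lt_one hz) hc contractive
  · have state_eq := (eq_feedbackState_iff hD p (norm_coordinateOperator_lt_one (hlam i))).2
      (system i).2
    simp only [transferFunction, ← state_eq]
    exact (system i).1.symm

end Realization

section Sufficiency

variable {X : Type*} {lam : X → ℂ × ℂ}

lemma normalizedForm_mul_sqrt {K : Matrix X X ℂ} (hK : ∀ i, 0 < K i i) (F : Finset X)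
    (w : X → ℂ) :
    normalizedForm K F (fun i => w i * (√(K i i).re : ℂ)) =
      ∑ i ∈ F, ∑ j ∈ F, w i * conj (w j) * K i j := by
  have sqrt_ne (i : X) : (√(K i i).re : ℂ) ≠ 0 :=
    Complex.ofReal_ne_zero.2 (Real.sqrt_pos.2 (Complex.pos_iff.1 (hK i)).1).ne'
  simp only [normalizedForm_eq (fun i => (hK i).le), mul_div_cancel_right₀ _ (sqrt_ne _)]

lemma GrammiansBounded.sum_mul_conj_le [Nonempty X] (hlam : ∀ i, lam i ∈ Bidisk)
    (hinj : Function.Injective lam) {M N : ℝ} (hM : 0 ≤ M) (hN : 0 < N)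
    (hMN : GrammiansBounded lam M N) {w : X → ℂ} {c : ℝ} (hw : ∀ i, ‖w i‖ ≤ c)
    {K : Matrix X X ℂ} (hK : IsAdmissibleMatrix lam K) (hpos : ∀ i, 0 < K i i) (F : Finset X) :
    ∑ i ∈ F, ∑ j ∈ F, w i * conj (w j) * K i j ≤
      (M * N * c ^ 2 : ℝ) * ∑ i ∈ F, ∑ j ∈ F, K i j := by
  have bounds := hMN (extendedKernel lam K) (hK.isAdmissibleKernel_extendedKernel hlam)
    fun i => by simpa only [extendedKernel_apply hinj] using hpos i
  simp only [extendedKernel_apply hinj] at bounds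
  have upper := (bounds F fun i => w i * (√(K i i).re : ℂ)).2
  have lower := (bounds F fun i => 1 * (√(K i i).re : ℂ)).1
  rw [show (of fun i j => K i j) = K from rfl, normalizedForm_mul_sqrt hpos] at upper lower
  have norm_sq_le (i : X) : ‖w i * (√(K i i).re : ℂ)‖ ^ 2 ≤
      c ^ 2 * ‖1 * (√(K i i).re : ℂ)‖ ^ 2 := by
    rw [norm_mul, one_mul, mul_pow]
    gcongr
    exact hw i
  calc
    _ ≤ _ := upper
    _ ≤ ((M * N * c ^ 2 * (1 / N * ∑ i ∈ F, ‖1 * (√(K i i).re : ℂ)‖ ^ 2) : ℝ) : ℂ) := by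
      rw [Complex.real_le_real]
      calc
        _ ≤ M * ∑ i ∈ F, c ^ 2 * ‖1 * (√(K i i).re : ℂ)‖ ^ 2 := by
          gcongr with i
          exact norm_sq_le i
        _ = _ := by rw [← Finset.mul_sum]; field_simp
    _ ≤ _ := by
      rw [Complex.ofReal_mul]
      refine mul_le_mul_of_nonneg_left ?_ (Complex.zero_le_real.2 (by positivity))
      simpa using lower

-- The kernel `𝟙 (z = w)` is admissible, and its Grammian is degenerate on repeated points.
lemma GrammiansBounded.injective (hlam : ∀ i, lam i ∈ Bidisk) {M N : ℝ} (hN : 0 < N)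
    (hMN : GrammiansBounded lam M N) : Function.Injective lam := by
  classical
  intro i j hij
  by_contra hne
  have : Nonempty Bidisk := ⟨⟨lam i, hlam i⟩⟩
  let k := extendedKernel (Subtype.val : Bidisk → ℂ × ℂ) 1
  have k_self (x : X) : k (lam x) (lam x) = 1 :=
    (extendedKernel_apply Subtype.val_injective 1 ⟨_, hlam x⟩ ⟨_, hlam x⟩).trans (one_apply_eq _)
  have k_admissible : IsAdmissibleKernel k :=
    (isAdmissibleMatrix_one Subtype.property).isAdmissibleKernel_extendedKernel Subtype.property
  have lower := (hMN k k_admissible (fun x => by simp [k_self]) {i, j}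
    fun x => if x = i then 1 else -1).1
  have form_eq : normalizedForm (of fun x y => k (lam x) (lam y)) {i, j}
      (fun x => if x = i then 1 else -1) = 0 := by
    simp [normalizedForm, Finset.sum_pair hne, hij, Ne.symm hne, k_self]
  rw [form_eq, Finset.sum_pair hne, ← Complex.ofReal_zero, Complex.real_le_real] at lower
  simp only [↓reduceIte, Ne.symm hne, norm_one, norm_neg] at lower
  have : 0 < 1 / N * (1 ^ 2 + 1 ^ 2) := by positivity
  exact this.not_ge lower

theorem GrammiansBounded.isInterpolating (hlam : ∀ i, lam i ∈ Bidisk) {M N : ℝ} (hM : 0 ≤ M)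
    (hN : 0 < N) (hMN : GrammiansBounded lam M N) : IsInterpolating lam := by
  rintro w ⟨c, hc⟩
  have hinj := hMN.injective hlam hN
  obtain hX | hX := isEmpty_or_nonempty X
  · exact ⟨0, differentiableOn_const 0, ⟨0, by simp⟩, hX.elim⟩
  have mem_cone : (of fun i j => (√(M * N * c ^ 2) : ℂ) ^ 2 - w i * conj (w j)) ∈
      aglerCone lam := by
    refine mem_aglerCone_of_sum_nonneg hlam (Matrix.ext fun i j => ?_) fun K hK hpos F => ?_
    · simp [mul_comm, ← Complex.ofReal_pow]
    · have := hMN.sum_mul_conj_le hlam hinj hM hN hc hK hpos F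
      rw [← sub_nonneg] at this
      refine this.trans_eq ?_
      rw [Finset.mul_sum, ← Finset.sum_sub_distrib]
      refine Finset.sum_congr rfl fun i _ => ?_
      rw [Finset.mul_sum, ← Finset.sum_sub_distrib]
      refine Finset.sum_congr rfl fun j _ => ?_
      rw [of_apply, ← Complex.ofReal_pow, Real.sq_sqrt (by positivity), sub_mul]
  obtain ⟨φ, hφ, norm_φ, φ_lam⟩ :=
    exists_bounded_interpolant_of_mem_aglerCone hlam (Real.sqrt_nonneg _) mem_cone
  exact ⟨φ, hφ, ⟨_, norm_φ⟩, φ_lam⟩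

end Sufficiency

section BivariatePolynomial

variable {A B : Type*} [Ring A] [Algebra ℂ A] [Ring B] [Algebra ℂ B]

/-- The value at `(a, b)` of the polynomial in two variables with coefficients `c m`, `m ∈ s`. In
each monomial the powers of `a` precede those of `b`, so `a` and `b` need not commute. -/
def polyEval (s : Finset (ℕ × ℕ)) (c : ℕ × ℕ → ℂ) (a b : A) : A :=
  ∑ m ∈ s, c m • (a ^ m.1 * b ^ m.2)

variable (s : Finset (ℕ × ℕ)) (c : ℕ × ℕ → ℂ)

lemma map_polyEval {F : Type*} [FunLike F A B] [AlgHomClass F ℂ A B] (f : F) (a b : A) :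
    f (polyEval s c a b) = polyEval s c (f a) (f b) := by
  simp only [polyEval, map_sum, map_smul, map_mul, map_pow]

lemma differentiable_polyEval {E A : Type*} [NormedAddCommGroup E] [NormedSpace ℂ E] [NormedRing A]
    [NormedAlgebra ℂ A] {a b : E → A} (ha : Differentiable ℂ a) (hb : Differentiable ℂ b) :
    Differentiable ℂ fun z => polyEval s c (a z) (b z) :=
  .fun_sum fun m _ => .const_smul ((ha.pow m.1).mul (hb.pow m.2)) (c m)

lemma polyEval_apply_of_eigenvector {E : Type*} [NormedAddCommGroup E] [NormedSpace ℂ E]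
    {S T : E →L[ℂ] E} {v : E} {z w : ℂ} (hS : S v = z • v) (hT : T v = w • v) :
    polyEval s c S T v = polyEval s c z w • v := by
  have pow_apply {R : E →L[ℂ] E} {μ : ℂ} (hR : R v = μ • v) (n : ℕ) : (R ^ n) v = μ ^ n • v := by
    induction n with
    | zero => simp
    | succ n ih => rw [pow_succ, mul_apply_eq_comp, hR, map_smul, ih, smul_smul, pow_succ']
  simp only [polyEval, _root_.sum_apply, Finset.sum_smul,
    _root_.smul_apply, mul_apply_eq_comp, pow_apply hT, map_smul,
    pow_apply hS, smul_smul, smul_eq_mul]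
  exact Finset.sum_congr rfl fun m _ => by ring_nf

-- Both arguments lie in the commutative C⋆-algebra generated by `u`, which is an algebra of
-- continuous functions on a subset of the unit circle.
lemma norm_polyEval_star_le {A : Type*} [CStarAlgebra A] {u : A} (hu : u ∈ unitary A) {ζ : ℂ}
    (hζ : ‖ζ‖ = 1) {r : ℝ} (h : ∀ z w : ℂ, ‖z‖ = 1 → ‖w‖ = 1 → ‖polyEval s c z w‖ ≤ r) :
    ‖polyEval s c u (ζ • star u)‖ ≤ r := by
  have hr : 0 ≤ r := (norm_nonneg _).trans (h 1 1 norm_one norm_one)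
  have hu' : IsStarNormal u := ⟨hu.1.trans hu.2.symm⟩
  let x : C(spectrum ℂ u, ℂ) := .restrict (spectrum ℂ u) (.id ℂ)
  have cfcHom_x : cfcHom hu' x = u := cfcHom_id hu'
  have eq_cfcHom : polyEval s c u (ζ • star u) = cfcHom hu' (polyEval s c x (ζ • star x)) := by
    conv_lhs => rw [← cfcHom_x, ← map_star, ← map_smul]
    exact (map_polyEval s c (cfcHom hu') x (ζ • star x)).symm
  rw [eq_cfcHom, norm_cfcHom u _ hu', ContinuousMap.norm_le _ hr]
  intro z
  have hz : ‖(z : ℂ)‖ = 1 := by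
    simpa using Unitary.spectrum_subset_circle ⟨u, hu⟩ z.2
  refine (h z (ζ * conj (z : ℂ)) hz ?_).trans_eq' ?_
  · rw [norm_mul, RCLike.norm_conj, hζ, hz, one_mul]
  · exact congrArg norm (map_polyEval s c (ContinuousMap.evalAlgHom ℂ ℂ z) x (ζ • star x)).symm

end BivariatePolynomial

section CommutingModel

section CoordinateOperator

variable {H₁ H₂ : Type*} [NormedAddCommGroup H₁] [InnerProductSpace ℂ H₁]
  [NormedAddCommGroup H₂] [InnerProductSpace ℂ H₂]

lemma coordinateOperator_one : coordinateOperator (H₁ := H₁) (H₂ := H₂) 1 = 1 :=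
  ContinuousLinearMap.ext fun u => by
    simp only [coordinateOperator_apply, Prod.fst_one, Prod.snd_one, one_smul]
    rfl

lemma coordinateOperator_mul (z w : ℂ × ℂ) :
    coordinateOperator (H₁ := H₁) (H₂ := H₂) (z * w) =
      coordinateOperator z * coordinateOperator w :=
  ContinuousLinearMap.ext fun u => by simp [coordinateOperator_apply, smul_smul]

lemma coordinateOperator_smul (ζ : ℂ) (z : ℂ × ℂ) :
    coordinateOperator (H₁ := H₁) (H₂ := H₂) (ζ • z) = ζ • coordinateOperator z :=
  ContinuousLinearMap.ext fun u => by
    apply WithLp.ofLp_injective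
    simp [coordinateOperator_apply, smul_smul]

variable [CompleteSpace H₁] [CompleteSpace H₂]

lemma star_coordinateOperator (z : ℂ × ℂ) :
    star (coordinateOperator (H₁ := H₁) (H₂ := H₂) z) = coordinateOperator (star z) := by
  refine ((ContinuousLinearMap.eq_adjoint_iff _ _).2 fun u v => ?_).symm
  simp [coordinateOperator_apply, WithLp.prod_inner_apply, inner_smul_left, inner_smul_right]

lemma coordinateOperator_mem_unitary {z : ℂ × ℂ} (hz : z ∈ unitary (ℂ × ℂ)) :
    coordinateOperator (H₁ := H₁) (H₂ := H₂) z ∈ unitary _ := by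
  rw [Unitary.mem_iff, star_coordinateOperator, ← coordinateOperator_mul,
    ← coordinateOperator_mul, hz.1, hz.2]
  exact ⟨coordinateOperator_one, coordinateOperator_one⟩

lemma star_mul_coordinateOperator_mem_unitary
    {U : WithLp 2 (H₁ × H₂) →L[ℂ] WithLp 2 (H₁ × H₂)} (hU : U ∈ unitary _) {ζ : ℂ} (hζ : ‖ζ‖ = 1) :
    star U * coordinateOperator (ζ, 1) ∈ unitary _ := by
  have : (ζ, 1) ∈ unitary (ℂ × ℂ) := by
    simp [Unitary.mem_iff, Prod.ext_iff, Complex.mul_conj', Complex.conj_mul', hζ]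
  exact mul_mem (Unitary.star_mem hU) (coordinateOperator_mem_unitary this)

lemma coordinateOperator_mul_eq_smul_star (U : WithLp 2 (H₁ × H₂) →L[ℂ] WithLp 2 (H₁ × H₂)) {ζ : ℂ}
    (hζ : ‖ζ‖ = 1) :
    coordinateOperator (1, ζ) * U = ζ • star (star U * coordinateOperator (ζ, 1)) := by
  have smul_star : ζ • star (ζ, (1 : ℂ)) = (1, ζ) := by
    ext <;> simp [Complex.mul_conj', hζ]
  rw [star_mul, star_star, star_coordinateOperator, ← smul_mul_assoc, ← coordinateOperator_smul,
    smul_star]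

end CoordinateOperator

universe u

variable {X : Type u} [Finite X]

lemma exists_finiteDimensional_inner_eq_of_posSemidef {K : Matrix X X ℂ} (hK : K.PosSemidef) :
    ∃ (H : Type u) (_ : NormedAddCommGroup H) (_ : InnerProductSpace ℂ H)
      (_ : FiniteDimensional ℂ H) (v : X → H), ∀ i j, ⟪v j, v i⟫_ℂ = K i j := by
  obtain ⟨H, _, _, _, v, hv⟩ := exists_inner_eq_of_posSemidef hK
  exact ⟨Submodule.span ℂ (Set.range v), inferInstance, inferInstance,
    .span_of_finite ℂ (Set.finite_range v),
    fun i => ⟨v i, Submodule.subset_span (Set.mem_range_self i)⟩, hv⟩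

-- A determinantal representation of multiplication by the coordinates on the distinguished variety
-- `z₁ z₂ = ζ`: the lurking isometry between `(x, z₁ y)` and `(z₂ x, y)`, where `x` and `y` are Gram
-- vectors of `(1 - z₁ z̄₁) K` and `(1 - z₂ z̄₂) K`.
lemma IsAdmissibleMatrix.exists_commuting_model {lam : X → ℂ × ℂ} {K : Matrix X X ℂ}
    (hK : IsAdmissibleMatrix lam K) :
    ∃ (E : Type u) (_ : NormedAddCommGroup E) (_ : InnerProductSpace ℂ E) (_ : CompleteSpace E)
      (g : X → E) (S T : ℂ → E →L[ℂ] E),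
      Differentiable ℂ S ∧ Differentiable ℂ T ∧
      (∀ ζ, ‖ζ‖ = 1 → S ζ ∈ unitary (E →L[ℂ] E) ∧ T ζ = ζ • star (S ζ)) ∧
      (∀ i, S ((lam i).1 * (lam i).2) (g i) = (lam i).1 • g i ∧
        T ((lam i).1 * (lam i).2) (g i) = (lam i).2 • g i) ∧
      ∀ i j, ⟪g j, g i⟫_ℂ = szegoInv (fun i => (lam i).1 * (lam i).2) i j * K i j := by
  obtain ⟨H₁, _, _, _, x, hx⟩ := exists_finiteDimensional_inner_eq_of_posSemidef hK.1
  obtain ⟨H₂, _, _, _, y, hy⟩ := exists_finiteDimensional_inner_eq_of_posSemidef hK.2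
  have := FiniteDimensional.complete ℂ H₁
  have := FiniteDimensional.complete ℂ H₂
  let g (i : X) : WithLp 2 (H₁ × H₂) := .toLp 2 (x i, (lam i).1 • y i)
  let g' (i : X) : WithLp 2 (H₁ × H₂) := .toLp 2 ((lam i).2 • x i, y i)
  have inner_g (i j : X) :
      ⟪g j, g i⟫_ℂ = szegoInv (fun i => (lam i).1 * (lam i).2) i j * K i j := by
    simp only [g, WithLp.prod_inner_apply, inner_smul_left, inner_smul_right, hx, hy,
      hadamard_apply, szegoInv_apply, map_mul]
    ring
  have inner_g' (i j : X) : ⟪g i, g j⟫_ℂ = ⟪g' i, g' j⟫_ℂ := by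
    simp only [g, g', WithLp.prod_inner_apply, inner_smul_left, inner_smul_right, hx, hy,
      hadamard_apply, szegoInv_apply]
    ring
  obtain ⟨U, hU, U_apply⟩ := exists_unitary_apply_eq_of_inner_eq inner_g'
  refine ⟨WithLp 2 (H₁ × H₂), inferInstance, inferInstance, inferInstance, g,
    fun ζ => star U * coordinateOperator (ζ, 1), fun ζ => coordinateOperator (1, ζ) * U,
    (differentiable_coordinateOperator (by fun_prop)).const_mul _,
    (differentiable_coordinateOperator (by fun_prop)).mul_const _,
    fun ζ hζ => ⟨star_mul_coordinateOperator_mem_unitary hU hζ,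
      coordinateOperator_mul_eq_smul_star U hζ⟩, fun i => ⟨?_, ?_⟩, inner_g⟩
  · have D_apply : coordinateOperator ((lam i).1 * (lam i).2, 1) (g i) = (lam i).1 • g' i := by
      apply WithLp.ofLp_injective
      simp [coordinateOperator_apply, g, g', smul_smul]
    rw [mul_apply_eq_comp, D_apply, ContinuousLinearMap.map_smul, (U_apply i).2]
  · rw [mul_apply_eq_comp, (U_apply i).1]
    apply WithLp.ofLp_injective
    simp [coordinateOperator_apply, g, g', smul_smul, mul_comm]

end CommutingModel

section PickNecessity

open Real (circleAverage)

/-- The Szegő kernel `(1 - s t̄)⁻¹` of the unit disc. -/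
noncomputable def szegoKernel (s t : ℂ) : ℂ := (1 - s * conj t)⁻¹

lemma conj_szegoKernel (s t : ℂ) : conj (szegoKernel s t) = szegoKernel t s := by
  simp [szegoKernel, mul_comm]

lemma one_sub_mul_conj_ne_zero {s t : ℂ} (h : ‖s‖ * ‖t‖ < 1) : 1 - s * conj t ≠ 0 := by
  refine sub_ne_zero.2 fun h_eq => ?_
  rw [← RCLike.norm_conj t, ← norm_mul, ← h_eq, norm_one] at h
  exact h.false

lemma continuousOn_szegoKernel {s : ℂ} (hs : ‖s‖ < 1) :
    ContinuousOn (szegoKernel s) (Metric.sphere 0 |1|) := by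
  refine ContinuousOn.inv₀ (by fun_prop) fun ζ hζ => one_sub_mul_conj_ne_zero ?_
  rw [mem_sphere_zero_iff_norm.1 hζ]
  simpa using hs

lemma circleAverage_szegoKernel_mul {s t : ℂ} (hs : ‖s‖ < 1) (ht : ‖t‖ < 1) {f : ℂ → ℂ}
    (hf : Differentiable ℂ f) :
    circleAverage (fun ζ => szegoKernel s ζ * conj (szegoKernel t ζ) * f ζ) 0 1 =
      szegoKernel s t * f s := by
  have hg : DiffContOnCl ℂ (fun ζ => szegoKernel ζ t * f ζ) (Metric.ball 0 |1|) := by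
    refine DifferentiableOn.diffContOnCl fun ζ hζ => ?_
    rw [closure_ball _ (by simp), mem_closedBall_zero_iff, abs_one] at hζ
    have kernel_differentiable : DifferentiableAt ℂ (fun ζ => szegoKernel ζ t) ζ :=
      DifferentiableAt.inv (by fun_prop) <| one_sub_mul_conj_ne_zero <|
        mul_lt_one_of_nonneg_of_lt_one_right hζ (norm_nonneg t) ht
    exact (kernel_differentiable.mul (hf ζ)).differentiableWithinAt
  rw [← hg.circleAverage_smul_div (w := s) (by simpa using hs)]
  refine Real.circleAverage_congr_sphere fun ζ hζ => ?_
  have hζ : ‖ζ‖ = 1 := by simpa using hζ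
  have ζ_ne : ζ ≠ 0 := norm_ne_zero_iff.1 (hζ ▸ one_ne_zero)
  have kernel_eq : szegoKernel s ζ = (ζ - 0) / (ζ - s) := by
    rw [szegoKernel, ← Complex.inv_eq_conj hζ, sub_zero, ← inv_div, sub_div, div_self ζ_ne,
      div_eq_mul_inv]
  simp only [conj_szegoKernel, kernel_eq, smul_eq_mul, mul_assoc]

variable {X E : Type*} [NormedAddCommGroup E] [InnerProductSpace ℂ E]

lemma circleAverage_inner_sum_szegoKernel {s : X → ℂ} (hs : ∀ i, ‖s i‖ < 1) (u : X → E)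
    {f : X → ℂ → E} (hf : ∀ i, Differentiable ℂ (f i)) (F : Finset X) (a : X → ℂ) :
    circleAverage (fun ζ => ⟪∑ j ∈ F, (a j * szegoKernel (s j) ζ) • u j,
        ∑ i ∈ F, (a i * szegoKernel (s i) ζ) • f i ζ⟫_ℂ) 0 1 =
      ∑ i ∈ F, ∑ j ∈ F, a i * conj (a j) * (szegoKernel (s i) (s j) * ⟪u j, f i (s i)⟫_ℂ) := by
  have inner_differentiable (i j : X) : Differentiable ℂ fun ζ => ⟪u j, f i ζ⟫_ℂ :=
    (innerSL ℂ (u j)).differentiable.comp (hf i)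
  have integrable (i j : X) : CircleIntegrable (fun ζ => (a i * conj (a j)) •
      (szegoKernel (s i) ζ * conj (szegoKernel (s j) ζ) * ⟪u j, f i ζ⟫_ℂ)) 0 1 := by
    have hi := continuousOn_szegoKernel (hs i)
    have hj := continuousOn_szegoKernel (hs j)
    have hij := (inner_differentiable i j).continuous.continuousOn (s := Metric.sphere 0 |1|)
    exact ContinuousOn.circleIntegrable' (by fun_prop)
  calc
    _ = circleAverage (fun ζ => ∑ q ∈ F ×ˢ F, (a q.1 * conj (a q.2)) • (szegoKernel (s q.1) ζ *
          conj (szegoKernel (s q.2) ζ) * ⟪u q.2, f q.1 ζ⟫_ℂ)) 0 1 := by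
      refine congrArg (circleAverage · 0 1) (funext fun ζ => ?_)
      simp only [inner_sum, sum_inner, inner_smul_left, inner_smul_right, Finset.sum_product,
        smul_eq_mul, map_mul, Finset.mul_sum]
      exact Finset.sum_congr rfl fun i _ => Finset.sum_congr rfl fun j _ => by ring
    _ = ∑ q ∈ F ×ˢ F, a q.1 * conj (a q.2) *
          (szegoKernel (s q.1) (s q.2) * ⟪u q.2, f q.1 (s q.1)⟫_ℂ) := by
      rw [Real.circleAverage_fun_sum fun q _ => integrable q.1 q.2]
      refine Finset.sum_congr rfl fun q _ => ?_
      rw [Real.circleAverage_fun_smul, smul_eq_mul,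
        circleAverage_szegoKernel_mul (hs _) (hs _) (inner_differentiable _ _)]
    _ = _ := Finset.sum_product _ _ _

lemma circleAverage_inner_le {h p y : ℂ → E} (hh : ContinuousOn h (Metric.sphere 0 |1|))
    (hp : ContinuousOn p (Metric.sphere 0 |1|)) (hy : ContinuousOn y (Metric.sphere 0 |1|)) {r : ℝ}
    (norm_y : ∀ ζ ∈ Metric.sphere (0 : ℂ) |1|, ‖y ζ‖ ≤ r * ‖h ζ‖)
    (h_proj : circleAverage (fun ζ => ⟪p ζ, y ζ⟫_ℂ) 0 1 =
      circleAverage (fun ζ => ⟪p ζ, p ζ⟫_ℂ) 0 1) :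
    circleAverage (fun ζ => ⟪p ζ, p ζ⟫_ℂ) 0 1 ≤
      (r : ℂ) ^ 2 * circleAverage (fun ζ => ⟪h ζ, h ζ⟫_ℂ) 0 1 := by
  have average_norm_sq {x : ℂ → E} (hx : ContinuousOn x (Metric.sphere 0 |1|)) :
      circleAverage (fun ζ => ⟪x ζ, x ζ⟫_ℂ) 0 1 = (circleAverage (fun ζ => ‖x ζ‖ ^ 2) 0 1 : ℝ) := by
    refine Eq.trans ?_ (Complex.ofRealCLM.circleAverage_comp_comm (hx.norm.pow 2).circleIntegrable')
    exact congrArg (circleAverage · 0 1) (funext fun ζ => by simp [inner_self_eq_norm_sq_to_K])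
  have average_re := Complex.reCLM.circleAverage_comp_comm
    (ContinuousOn.inner (𝕜 := ℂ) hp hy).circleIntegrable'
  rw [h_proj, average_norm_sq hp] at average_re
  rw [average_norm_sq hp, average_norm_sq hh]
  norm_cast
  have pointwise : ∀ ζ ∈ Metric.sphere (0 : ℂ) |1|,
      2 * RCLike.re ⟪p ζ, y ζ⟫_ℂ - ‖p ζ‖ ^ 2 ≤ r ^ 2 * ‖h ζ‖ ^ 2 := fun ζ hζ => by
    have := @norm_sub_sq ℂ E _ _ _ (p ζ) (y ζ)
    have := pow_le_pow_left₀ (norm_nonneg _) (norm_y ζ hζ) 2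
    nlinarith [sq_nonneg ‖p ζ - y ζ‖]
  have integrable_p := (hp.norm.pow 2).circleIntegrable'
  have integrable_h := (hh.norm.pow 2).circleIntegrable'
  have integrable_re := (Complex.continuous_re.comp_continuousOn
    (ContinuousOn.inner (𝕜 := ℂ) hp hy)).circleIntegrable'
  have average_le := Real.circleAverage_mono
    ((integrable_re.const_smul (a := (2 : ℝ))).sub integrable_p)
    (integrable_h.const_smul (a := r ^ 2)) pointwise
  rw [Real.circleAverage_sub (integrable_re.const_smul (a := (2 : ℝ))) integrable_p,
    Real.circleAverage_smul, Real.circleAverage_smul] at average_le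
  change circleAverage (Complex.re ∘ fun ζ => ⟪p ζ, y ζ⟫_ℂ) 0 1 =
    circleAverage ((fun ζ => ‖p ζ‖) ^ 2) 0 1 at average_re
  rwa [average_re, smul_eq_mul, two_mul, add_sub_cancel_right] at average_le

lemma posSemidef_szegoKernel_mul_sub {s : X → ℂ} (hs : ∀ i, ‖s i‖ < 1) {T : ℂ → E →L[ℂ] E}
    (hT : Differentiable ℂ T) {r : ℝ} (norm_T : ∀ ζ, ‖ζ‖ = 1 → ‖T ζ‖ ≤ r) (g : X → E) :
    (of fun i j => szegoKernel (s i) (s j) *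
      ((r : ℂ) ^ 2 * ⟪g j, g i⟫_ℂ - ⟪T (s j) (g j), T (s i) (g i)⟫_ℂ)).PosSemidef := by
  refine posSemidef_iff_sum_nonneg.2 fun F a => ?_
  let combination (f : X → ℂ → E) (ζ : ℂ) : E := ∑ i ∈ F, (a i * szegoKernel (s i) ζ) • f i ζ
  have combination_continuousOn {f : X → ℂ → E} (hf : ∀ i, Differentiable ℂ (f i)) :
      ContinuousOn (combination f) (Metric.sphere 0 |1|) :=
    continuousOn_finsetSum _ fun i _ =>
      (continuousOn_const.mul (continuousOn_szegoKernel (hs i))).smul (hf i).continuous.continuousOn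
  have combination_T (ζ : ℂ) :
      combination (fun i ζ => T ζ (g i)) ζ = T ζ (combination (fun i _ => g i) ζ) := by
    simp only [combination, map_sum, map_smul]
  have T_differentiable (i : X) : Differentiable ℂ fun ζ => T ζ (g i) := hT.clm_apply (by fun_prop)
  have average_le := circleAverage_inner_le (r := r)
    (combination_continuousOn (f := fun i _ => g i) fun i => differentiable_const _)
    (combination_continuousOn (f := fun i _ => T (s i) (g i)) fun i => differentiable_const _)
    (combination_continuousOn T_differentiable)
    (fun ζ hζ => by
      rw [combination_T]
      exact (T ζ).le_of_opNorm_le (norm_T ζ (by simpa using hζ)) _)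
    ((circleAverage_inner_sum_szegoKernel hs _ T_differentiable F a).trans
      (circleAverage_inner_sum_szegoKernel hs _ (fun i => differentiable_const _) F a).symm)
  simp only [combination] at average_le
  rw [circleAverage_inner_sum_szegoKernel hs _ fun i => differentiable_const _,
    circleAverage_inner_sum_szegoKernel hs _ fun i => differentiable_const _,
    ← sub_nonneg, Finset.mul_sum, ← Finset.sum_sub_distrib] at average_le
  refine average_le.trans_eq (Finset.sum_congr rfl fun i _ => ?_)
  rw [Finset.mul_sum, ← Finset.sum_sub_distrib]
  exact Finset.sum_congr rfl fun j _ => by rw [of_apply]; ring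

end PickNecessity

section VonNeumannPolynomial

lemma szegoKernel_mul_szegoInv {X : Type*} {s : X → ℂ} (hs : ∀ i, ‖s i‖ < 1) (i j : X) :
    szegoKernel (s i) (s j) * szegoInv s i j = 1 :=
  inv_mul_cancel₀ <| one_sub_mul_conj_ne_zero <|
    mul_lt_one_of_nonneg_of_lt_one_right (hs i).le (norm_nonneg _) (hs j)

universe u

variable {X : Type u} {lam : X → ℂ × ℂ} {K : Matrix X X ℂ} (s : Finset (ℕ × ℕ)) (c : ℕ × ℕ → ℂ)
  {r : ℝ}

lemma IsAdmissibleMatrix.submatrix (hK : IsAdmissibleMatrix lam K) {Y : Type*} (e : Y → X) :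
    IsAdmissibleMatrix (fun i => lam (e i)) (K.submatrix e e) :=
  ⟨hK.1.submatrix e, hK.2.submatrix e⟩

lemma IsAdmissibleMatrix.posSemidef_polyEval_of_finite [Finite X] (hK : IsAdmissibleMatrix lam K)
    (hlam : ∀ i, lam i ∈ Bidisk)
    (hr : ∀ z w : ℂ, ‖z‖ = 1 → ‖w‖ = 1 → ‖polyEval s c z w‖ ≤ r) :
    (of fun i j => ((r : ℂ) ^ 2 - polyEval s c (lam i).1 (lam i).2 *
      conj (polyEval s c (lam j).1 (lam j).2)) * K i j).PosSemidef := by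
  obtain ⟨E, _, _, _, g, S, T, hS, hT, hST, h_eigen, inner_g⟩ := hK.exists_commuting_model
  have norm_lt (i : X) : ‖(lam i).1 * (lam i).2‖ < 1 := by
    rw [norm_mul]
    exact mul_lt_one_of_nonneg_of_lt_one_left (norm_nonneg _) (hlam i).1 (hlam i).2.le
  have norm_le (ζ : ℂ) (hζ : ‖ζ‖ = 1) : ‖polyEval s c (S ζ) (T ζ)‖ ≤ r := by
    rw [(hST ζ hζ).2]
    exact norm_polyEval_star_le s c (hST ζ hζ).1 hζ hr
  have := posSemidef_szegoKernel_mul_sub norm_lt (differentiable_polyEval s c hS hT) norm_le g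
  convert this using 1
  ext i j
  rw [of_apply, of_apply, polyEval_apply_of_eigenvector s c (h_eigen i).1 (h_eigen i).2,
    polyEval_apply_of_eigenvector s c (h_eigen j).1 (h_eigen j).2, inner_smul_left,
    inner_smul_right, inner_g]
  linear_combination (-K i j * ((r : ℂ) ^ 2 - polyEval s c (lam i).1 (lam i).2 *
      conj (polyEval s c (lam j).1 (lam j).2))) * szegoKernel_mul_szegoInv norm_lt i j

lemma IsAdmissibleMatrix.posSemidef_polyEval (hK : IsAdmissibleMatrix lam K)
    (hlam : ∀ i, lam i ∈ Bidisk)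
    (hr : ∀ z w : ℂ, ‖z‖ = 1 → ‖w‖ = 1 → ‖polyEval s c z w‖ ≤ r) :
    (of fun i j => ((r : ℂ) ^ 2 - polyEval s c (lam i).1 (lam i).2 *
      conj (polyEval s c (lam j).1 (lam j).2)) * K i j).PosSemidef := by
  refine posSemidef_iff_sum_nonneg.2 fun F a => ?_
  have := (hK.submatrix ((↑) : F → X)).posSemidef_polyEval_of_finite s c (fun i => hlam i) hr
  simp only [← Finset.sum_coe_sort F]
  exact posSemidef_iff_sum_nonneg.1 this Finset.univ fun i => a i

end VonNeumannPolynomial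

section RootsOfUnity

/-- The polynomial of degree less than `L` which is `1` at `ω ^ k` and vanishes at the other powers
of the primitive `L`-th root of unity `ω`. -/
noncomputable def rootBasis (L : ℕ) (ω : ℂ) (k : ℕ) (z : ℂ) : ℂ :=
  (L : ℂ)⁻¹ * ∑ m ∈ range L, ((ω ^ k)⁻¹ * z) ^ m

lemma norm_rootBasis_le {L : ℕ} {ω z : ℂ} (hω : ‖ω‖ = 1) (hz : ‖z‖ ≤ 1) (k : ℕ) :
    ‖rootBasis L ω k z‖ ≤ 1 := by
  rw [rootBasis, norm_mul, norm_inv, Complex.norm_natCast]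
  refine inv_mul_le_one_of_le₀ ?_ L.cast_nonneg
  refine (norm_sum_le_of_le (n := fun _ => 1) _ fun m _ => ?_).trans_eq (by simp)
  rw [norm_pow, norm_mul, norm_inv, norm_pow, hω, one_pow, inv_one, one_mul]
  exact pow_le_one₀ (norm_nonneg z) hz

lemma sum_rootBasis_mul_pow {L : ℕ} [NeZero L] {ω : ℂ} (hω : IsPrimitiveRoot ω L) (n : ℕ) (z : ℂ) :
    ∑ k ∈ range L, rootBasis L ω k z * (ω ^ k) ^ n = z ^ (n % L) := by
  have ω_ne : ω ≠ 0 := hω.ne_zero (NeZero.ne L)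
  have orthogonality (m : ℕ) (hm : m < L) :
      ∑ k ∈ range L, ((ω ^ k)⁻¹ ^ m * (ω ^ k) ^ n) = if m = n % L then (L : ℂ) else 0 := by
    have term_eq (k : ℕ) : (ω ^ k)⁻¹ ^ m * (ω ^ k) ^ n = ((ω ^ m)⁻¹ * ω ^ (n % L)) ^ k := by
      rw [← pow_eq_pow_mod n hω.pow_eq_one, mul_pow, inv_pow, inv_pow, ← pow_mul, ← pow_mul,
        ← pow_mul, ← pow_mul, mul_comm m, mul_comm n]
    simp only [term_eq]
    split_ifs with h
    · simp [h, inv_mul_cancel₀ (pow_ne_zero _ ω_ne)]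
    · have ratio_ne : (ω ^ m)⁻¹ * ω ^ (n % L) ≠ 1 := fun h_eq => h <|
        hω.pow_inj hm (Nat.mod_lt _ (NeZero.pos L)) ((inv_mul_eq_one₀ (pow_ne_zero m ω_ne)).1 h_eq)
      rw [geom_sum_eq ratio_ne, mul_pow, inv_pow, pow_right_comm, pow_right_comm ω (n % L),
        hω.pow_eq_one]
      simp
  calc
    _ = (L : ℂ)⁻¹ * ∑ m ∈ range L, z ^ m * ∑ k ∈ range L, ((ω ^ k)⁻¹ ^ m * (ω ^ k) ^ n) := by
      simp only [rootBasis, Finset.mul_sum, Finset.sum_mul]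
      rw [Finset.sum_comm]
      exact Finset.sum_congr rfl fun m _ => Finset.sum_congr rfl fun k _ => by ring
    _ = (L : ℂ)⁻¹ * ∑ m ∈ range L, z ^ m * if m = n % L then (L : ℂ) else 0 := by
      congr 1
      exact Finset.sum_congr rfl fun m hm => by rw [orthogonality m (mem_range.1 hm)]
    _ = z ^ (n % L) := by
      simp [Nat.mod_lt _ (NeZero.pos L), NeZero.ne L, mul_comm]

variable {E : Type*} [NormedAddCommGroup E] [NormedSpace ℂ E] [CompleteSpace E]

lemma exists_norm_coeff_le_hasSum {ρ C : ℝ} (hρ : 0 < ρ) {f : ℂ → E}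
    (hf : DifferentiableOn ℂ f (Metric.closedBall 0 ρ))
    (norm_f : ∀ z ∈ Metric.closedBall 0 ρ, ‖f z‖ ≤ C) :
    ∃ c : ℕ → E, (∀ n, ‖c n‖ ≤ C * ρ⁻¹ ^ n) ∧
      ∀ z, ‖z‖ < ρ → HasSum (fun n => z ^ n • c n) (f z) := by
  refine ⟨fun n => (n.factorial : ℂ)⁻¹ • iteratedDeriv n f 0, fun n => ?_, fun z hz => ?_⟩
  · have := Complex.norm_iteratedDeriv_le_of_forall_mem_sphere_norm_le n hρ
      (hf.diffContOnCl_ball subset_rfl) fun z hz => norm_f z (Metric.sphere_subset_closedBall hz)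
    rw [norm_smul, norm_inv, Complex.norm_natCast, inv_mul_le_iff₀ (by positivity), inv_pow]
    exact this.trans_eq (by ring)
  · convert Complex.hasSum_taylorSeries_on_ball (hf.mono Metric.ball_subset_closedBall)
      (mem_ball_zero_iff.2 hz) using 2 with n
    rw [sub_zero, smul_comm]

lemma norm_sub_sum_rootBasis_le {L : ℕ} [NeZero L] {ω : ℂ} (hω : IsPrimitiveRoot ω L) {ρ C : ℝ}
    (hρ : 1 < ρ) {f : ℂ → E} (hf : DifferentiableOn ℂ f (Metric.closedBall 0 ρ))
    (norm_f : ∀ z ∈ Metric.closedBall 0 ρ, ‖f z‖ ≤ C) {z : ℂ} (hz : ‖z‖ ≤ 1) :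
    ‖f z - ∑ k ∈ range L, rootBasis L ω k z • f (ω ^ k)‖ ≤ 2 * C * (1 - ρ⁻¹)⁻¹ * ρ⁻¹ ^ L := by
  have hρ₀ : 0 < ρ := one_pos.trans hρ
  obtain ⟨c, norm_c, hasSum⟩ := exists_norm_coeff_le_hasSum hρ₀ hf norm_f
  have taylor {w : ℂ} (hw : ‖w‖ ≤ 1) : HasSum (fun n => w ^ n • c n) (f w) :=
    hasSum w (hw.trans_lt hρ)
  have norm_ω (k : ℕ) : ‖ω ^ k‖ ≤ 1 := by
    rw [norm_pow, hω.norm'_eq_one (NeZero.ne L), one_pow]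
  have aliased : HasSum (fun n => z ^ (n % L) • c n)
      (∑ k ∈ range L, rootBasis L ω k z • f (ω ^ k)) := by
    convert hasSum_sum fun k (_ : k ∈ range L) => (taylor (norm_ω k)).const_smul (rootBasis L ω k z)
      using 2 with n
    rw [← sum_rootBasis_mul_pow hω, Finset.sum_smul]
    exact Finset.sum_congr rfl fun k _ => mul_smul _ _ _
  have tail := (hasSum_nat_add_iff' L).2 ((taylor hz).sub aliased)
  have head_eq_zero : ∑ n ∈ range L, (z ^ n • c n - z ^ (n % L) • c n) = 0 :=
    Finset.sum_eq_zero fun n hn => by rw [Nat.mod_eq_of_lt (mem_range.1 hn), sub_self]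
  rw [head_eq_zero, sub_zero] at tail
  have geometric := (hasSum_geometric_of_lt_one (inv_nonneg.2 hρ₀.le)
    (inv_lt_one_of_one_lt₀ hρ)).mul_left (2 * C * ρ⁻¹ ^ L)
  refine (tail.norm_le_of_bounded geometric fun n => ?_).trans_eq (by ring)
  have norm_sub_le_two : ‖z ^ (n + L) - z ^ ((n + L) % L)‖ ≤ 2 := by
    refine (norm_sub_le _ _).trans ?_
    rw [norm_pow, norm_pow, ← one_add_one_eq_two]
    gcongr <;> exact pow_le_one₀ (norm_nonneg z) hz
  rw [← sub_smul, norm_smul]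
  calc
    _ ≤ 2 * (C * ρ⁻¹ ^ (n + L)) := by gcongr; exact norm_c _
    _ = 2 * C * ρ⁻¹ ^ L * ρ⁻¹ ^ n := by ring

end RootsOfUnity

section PolynomialApproximation

lemma exists_polyEval_eq_sum_rootBasis (L : ℕ) (ω : ℂ) (A : ℕ → ℕ → ℂ) :
    ∃ s c, ∀ z w, polyEval s c z w =
      ∑ k ∈ range L, rootBasis L ω k z * ∑ l ∈ range L, rootBasis L ω l w * A k l := by
  refine ⟨range L ×ˢ range L, fun m => ∑ q ∈ range L ×ˢ range L,
    (L : ℂ)⁻¹ ^ 2 * (ω ^ q.1)⁻¹ ^ m.1 * (ω ^ q.2)⁻¹ ^ m.2 * A q.1 q.2, fun z w => ?_⟩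
  simp only [polyEval, Finset.sum_smul]
  rw [Finset.sum_comm, Finset.sum_product]
  simp only [Finset.mul_sum]
  refine Finset.sum_congr rfl fun k _ => Finset.sum_congr rfl fun l _ => ?_
  calc
    _ = (L : ℂ)⁻¹ ^ 2 * A k l * ∑ m ∈ range L ×ˢ range L,
          ((ω ^ k)⁻¹ * z) ^ m.1 * ((ω ^ l)⁻¹ * w) ^ m.2 := by
      rw [Finset.mul_sum]
      exact Finset.sum_congr rfl fun m _ => by rw [smul_eq_mul]; ring
    _ = rootBasis L ω k z * (rootBasis L ω l w * A k l) := by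
      rw [Finset.sum_product, ← Finset.sum_mul_sum, rootBasis, rootBasis]
      ring

lemma norm_sub_sum_sum_rootBasis_le {L : ℕ} [NeZero L] {ω : ℂ} (hω : IsPrimitiveRoot ω L) {ρ C : ℝ}
    (hρ : 1 < ρ) {φ : ℂ × ℂ → ℂ} (hφ : DifferentiableOn ℂ φ (Metric.closedBall 0 ρ))
    (norm_φ : ∀ z ∈ Metric.closedBall 0 ρ, ‖φ z‖ ≤ C) {z w : ℂ} (hz : ‖z‖ ≤ 1) (hw : ‖w‖ ≤ 1) :
    ‖φ (z, w) - ∑ k ∈ range L, rootBasis L ω k z *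
        ∑ l ∈ range L, rootBasis L ω l w * φ (ω ^ k, ω ^ l)‖ ≤
      (1 + L) * (2 * C * (1 - ρ⁻¹)⁻¹ * ρ⁻¹ ^ L) := by
  have norm_ω : ‖ω‖ = 1 := hω.norm'_eq_one (NeZero.ne L)
  set error : ℝ := 2 * C * (1 - ρ⁻¹)⁻¹ * ρ⁻¹ ^ L
  have first_error : ‖φ (z, w) - ∑ k ∈ range L, rootBasis L ω k z * φ (ω ^ k, w)‖ ≤ error := by
    have maps : Set.MapsTo (fun u : ℂ => (u, w)) (Metric.closedBall 0 ρ) (Metric.closedBall 0 ρ) :=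
      fun u hu => by simpa [dist_zero_right, Prod.norm_def, hw.trans hρ.le] using hu
    exact norm_sub_sum_rootBasis_le hω hρ (hφ.comp (by fun_prop) maps)
      (fun u hu => norm_φ (u, w) (maps hu)) hz
  have second_error (k : ℕ) :
      ‖φ (ω ^ k, w) - ∑ l ∈ range L, rootBasis L ω l w * φ (ω ^ k, ω ^ l)‖ ≤ error := by
    have maps : Set.MapsTo (fun u : ℂ => (ω ^ k, u)) (Metric.closedBall 0 ρ)
        (Metric.closedBall 0 ρ) := fun u hu => by
      simpa [dist_zero_right, Prod.norm_def, norm_ω, hρ.le] using hu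
    exact norm_sub_sum_rootBasis_le hω hρ (hφ.comp (by fun_prop) maps)
      (fun u hu => norm_φ (ω ^ k, u) (maps hu)) hw
  calc
    _ = ‖(φ (z, w) - ∑ k ∈ range L, rootBasis L ω k z * φ (ω ^ k, w)) +
          ∑ k ∈ range L, rootBasis L ω k z *
            (φ (ω ^ k, w) - ∑ l ∈ range L, rootBasis L ω l w * φ (ω ^ k, ω ^ l))‖ := by
      simp only [mul_sub, Finset.sum_sub_distrib, sub_add_sub_cancel]
    _ ≤ error + ∑ _k ∈ range L, 1 * error := by
      refine norm_add_le_of_le first_error (norm_sum_le_of_le _ fun k _ => ?_)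
      exact norm_mul_le_of_le (norm_rootBasis_le norm_ω hz k) (second_error k)
    _ = (1 + L) * error := by
      rw [Finset.sum_const, card_range, nsmul_eq_mul]
      ring

lemma exists_norm_polyEval_sub_le {ρ : ℝ} (hρ : 1 < ρ) {φ : ℂ × ℂ → ℂ}
    (hφ : DifferentiableOn ℂ φ (Metric.closedBall 0 ρ)) {ε : ℝ} (hε : 0 < ε) :
    ∃ s c, ∀ z w, ‖z‖ ≤ 1 → ‖w‖ ≤ 1 → ‖polyEval s c z w - φ (z, w)‖ ≤ ε := by
  obtain ⟨C, norm_φ⟩ := (isCompact_closedBall (0 : ℂ × ℂ) ρ).exists_bound_of_continuousOn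
    hφ.continuousOn
  have tendsto_error :
      Tendsto (fun L : ℕ => (1 + L) * (2 * C * (1 - ρ⁻¹)⁻¹ * ρ⁻¹ ^ L)) atTop (𝓝 0) := by
    have hρ' := inv_lt_one_of_one_lt₀ hρ
    have hρ₀ : 0 ≤ ρ⁻¹ := inv_nonneg.2 (zero_le_one.trans hρ.le)
    have := ((tendsto_pow_atTop_nhds_zero_of_lt_one hρ₀ hρ').add
      (tendsto_self_mul_const_pow_of_lt_one hρ₀ hρ')).const_mul (2 * C * (1 - ρ⁻¹)⁻¹)
    rw [add_zero, mul_zero] at this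
    exact this.congr fun L => by ring
  obtain ⟨L, hL, L_ne⟩ :=
    ((tendsto_error.eventually_le_const hε).and (eventually_ne_atTop 0)).exists
  have : NeZero L := ⟨L_ne⟩
  let ω := Complex.exp (2 * Real.pi * Complex.I / L)
  obtain ⟨s, c, hsc⟩ := exists_polyEval_eq_sum_rootBasis L ω fun k l => φ (ω ^ k, ω ^ l)
  refine ⟨s, c, fun z w hz hw => ?_⟩
  rw [norm_sub_rev, hsc]
  have hω : IsPrimitiveRoot ω L := Complex.isPrimitiveRoot_exp L L_ne
  exact (norm_sub_sum_sum_rootBasis_le hω hρ hφ norm_φ hz hw).trans hL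

lemma bidisk_eq_ball : Bidisk = Metric.ball 0 1 := by
  ext z
  rw [mem_ball_zero_iff, Prod.norm_def, max_lt_iff, Bidisk, Set.mem_ofPred_eq]

lemma exists_norm_polyEval_sub_smul_le {φ : ℂ × ℂ → ℂ} (hφ : DifferentiableOn ℂ φ Bidisk) {t : ℝ}
    (ht₀ : 0 < t) (ht₁ : t < 1) {ε : ℝ} (hε : 0 < ε) :
    ∃ s c, ∀ z w, ‖z‖ ≤ 1 → ‖w‖ ≤ 1 → ‖polyEval s c z w - φ (t • (z, w))‖ ≤ ε := by
  obtain ⟨ρ, hρ, hρt⟩ := exists_between (one_lt_inv₀ ht₀ |>.2 ht₁)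
  have maps : Set.MapsTo (fun z : ℂ × ℂ => t • z) (Metric.closedBall 0 ρ) Bidisk := fun z hz => by
    rw [mem_closedBall_zero_iff] at hz
    rw [bidisk_eq_ball, mem_ball_zero_iff, norm_smul, Real.norm_of_nonneg ht₀.le]
    exact (lt_inv_mul_iff₀ ht₀).1 (by simpa using hz.trans_lt hρt)
  exact exists_norm_polyEval_sub_le hρ (hφ.comp (by fun_prop) maps) hε

lemma exists_polyEval_tendsto {φ : ℂ × ℂ → ℂ} {C : ℝ} (hφ : DifferentiableOn ℂ φ Bidisk)
    (norm_φ : ∀ z ∈ Bidisk, ‖φ z‖ ≤ C) :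
    ∃ (s : ℕ → Finset (ℕ × ℕ)) (c : ℕ → ℕ × ℕ → ℂ),
      (∀ n (z w : ℂ), ‖z‖ = 1 → ‖w‖ = 1 →
        ‖polyEval (s n) (c n) z w‖ ≤ C + 1 / ((n : ℝ) + 1)) ∧
      ∀ z ∈ Bidisk, Tendsto (fun n => polyEval (s n) (c n) z.1 z.2) atTop (𝓝 (φ z)) := by
  obtain ⟨t, -, ht, tendsto_t⟩ := exists_seq_strictMono_tendsto' (zero_lt_one (α := ℝ))
  choose s c hsc using fun n : ℕ => exists_norm_polyEval_sub_smul_le hφ (ht n).1 (ht n).2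
    (Nat.one_div_pos_of_nat (α := ℝ) (n := n))
  refine ⟨s, c, fun n z w hz hw => ?_, fun z hz => ?_⟩
  · have smul_mem : t n • (z, w) ∈ Bidisk := by
      simpa [Bidisk, hz, hw, abs_of_pos (ht n).1] using (ht n).2
    refine (norm_le_insert' _ (φ (t n • (z, w)))).trans (add_le_add (norm_φ _ smul_mem) ?_)
    exact hsc n z w hz.le hw.le
  · have difference_tendsto : Tendsto
        (fun n => polyEval (s n) (c n) z.1 z.2 - φ (t n • z)) atTop (𝓝 0) :=
      squeeze_zero_norm (fun n => hsc n z.1 z.2 hz.1.le hz.2.le)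
        tendsto_one_div_add_atTop_nhds_zero_nat
    have dilation_tendsto : Tendsto (fun n => φ (t n • z)) atTop (𝓝 (φ z)) := by
      have := tendsto_t.smul_const z
      rw [one_smul] at this
      have hz' : Bidisk ∈ 𝓝 z := (bidisk_eq_ball ▸ Metric.isOpen_ball).mem_nhds hz
      exact (hφ.continuousOn.continuousAt hz').tendsto.comp this
    simpa using difference_tendsto.add dilation_tendsto

end PolynomialApproximation

section VonNeumann

variable {X : Type*} {lam : X → ℂ × ℂ} {K : Matrix X X ℂ}

lemma IsAdmissibleMatrix.posSemidef_sq_sub_mul (hK : IsAdmissibleMatrix lam K)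
    (hlam : ∀ i, lam i ∈ Bidisk) {φ : ℂ × ℂ → ℂ} {C : ℝ} (hφ : DifferentiableOn ℂ φ Bidisk)
    (norm_φ : ∀ z ∈ Bidisk, ‖φ z‖ ≤ C) :
    (of fun i j => ((C : ℂ) ^ 2 - φ (lam i) * conj (φ (lam j))) * K i j).PosSemidef := by
  obtain ⟨s, c, norm_polyEval_le, tendsto_polyEval⟩ := exists_polyEval_tendsto hφ norm_φ
  have tendsto_bound : Tendsto (fun n : ℕ => ((C + 1 / ((n : ℝ) + 1) : ℝ) : ℂ)) atTop (𝓝 C) := by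
    have := (tendsto_one_div_add_atTop_nhds_zero_nat (𝕜 := ℝ)).const_add C
    rw [add_zero] at this
    exact (Complex.continuous_ofReal.tendsto C).comp this
  have tendsto_φ (i : X) := tendsto_polyEval (lam i) (hlam i)
  have tendsto_matrix : Tendsto (fun n : ℕ => (of fun i j =>
      (((C + 1 / ((n : ℝ) + 1) : ℝ) : ℂ) ^ 2 - polyEval (s n) (c n) (lam i).1 (lam i).2 *
        conj (polyEval (s n) (c n) (lam j).1 (lam j).2)) * K i j : Matrix X X ℂ)) atTop
      (𝓝 (of fun i j => ((C : ℂ) ^ 2 - φ (lam i) * conj (φ (lam j))) * K i j)) :=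
    tendsto_pi_nhds.2 fun i => tendsto_pi_nhds.2 fun j => ((tendsto_bound.pow 2).sub
      ((tendsto_φ i).mul ((Complex.continuous_conj.tendsto _).comp (tendsto_φ j)))).mul_const _
  exact isClosed_setOf_posSemidef.mem_of_tendsto tendsto_matrix
    (.of_forall fun n => hK.posSemidef_polyEval (s n) (c n) hlam (norm_polyEval_le n))

lemma IsAdmissibleMatrix.norm_sum_smul_le (hK : IsAdmissibleMatrix lam K)
    (hlam : ∀ i, lam i ∈ Bidisk) {φ : ℂ × ℂ → ℂ} {C : ℝ} (hφ : DifferentiableOn ℂ φ Bidisk)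
    (norm_φ : ∀ z ∈ Bidisk, ‖φ z‖ ≤ C) {E : Type*} [NormedAddCommGroup E] [InnerProductSpace ℂ E]
    {v : X → E} (hv : ∀ i j, ⟪v j, v i⟫_ℂ = K i j) (F : Finset X) (a : X → ℂ) :
    ‖∑ i ∈ F, (a i * φ (lam i)) • v i‖ ≤ C * ‖∑ i ∈ F, a i • v i‖ := by
  have hC : 0 ≤ C := (norm_nonneg _).trans (norm_φ 0 (by simp [Bidisk]))
  have := posSemidef_iff_sum_nonneg.1 (hK.posSemidef_sq_sub_mul hlam hφ norm_φ) F a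
  have norm_sq_le : ((‖∑ i ∈ F, (a i * φ (lam i)) • v i‖ ^ 2 : ℝ) : ℂ) ≤
      ((C ^ 2 * ‖∑ i ∈ F, a i • v i‖ ^ 2 : ℝ) : ℂ) := by
    rw [Complex.ofReal_mul, norm_sum_smul_sq, norm_sum_smul_sq, ← sub_nonneg, Finset.mul_sum,
      ← Finset.sum_sub_distrib]
    refine this.trans_eq (Finset.sum_congr rfl fun i _ => ?_)
    rw [Finset.mul_sum, ← Finset.sum_sub_distrib]
    refine Finset.sum_congr rfl fun j _ => ?_
    rw [of_apply, hv, map_mul, Complex.ofReal_pow]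
    ring
  rw [Complex.real_le_real, ← mul_pow] at norm_sq_le
  exact le_of_sq_le_sq norm_sq_le (by positivity)

end VonNeumann

section UniformBoundedness

lemma exists_seminorm_le_mul_norm {𝕜 E ι : Type*} [NontriviallyNormedField 𝕜]
    [SeminormedAddCommGroup E] [NormedSpace 𝕜 E] [BarrelledSpace 𝕜 E] {p : ι → Seminorm 𝕜 E}
    (hp : ∀ i, Continuous (p i)) (bdd : ∀ x, BddAbove (Set.range fun i => p i x)) :
    ∃ C > 0, ∀ i x, p i x ≤ C * ‖x‖ := by
  have bdd_p : BddAbove (Set.range p) := Seminorm.bddAbove_range_iff.2 bdd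
  have continuous_iSup : Continuous (⨆ i, p i : Seminorm 𝕜 E) := by
    rw [Seminorm.coe_iSup_eq bdd_p]
    exact Seminorm.continuous_iSup p hp bdd_p
  obtain ⟨C, hC, le_C⟩ := Seminorm.bound_of_continuous_normedSpace _ continuous_iSup
  exact ⟨C, hC, fun i x => (le_ciSup bdd_p i x).trans (le_C x)⟩

variable {X : Type*}

/-- The linear map `w ↦ ∑ aᵢ wᵢ vᵢ` on bounded families of scalars `w`. -/
def multiplierMap {E : Type*} [NormedAddCommGroup E] [NormedSpace ℂ E] (v : X → E)
    (F : Finset X) (a : X → ℂ) : lp (fun _ : X => ℂ) ⊤ →ₗ[ℂ] E where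
  toFun w := ∑ i ∈ F, (a i * w i) • v i
  map_add' w w' := by
    simp only [lp.coeFn_add, Pi.add_apply, mul_add, add_smul, Finset.sum_add_distrib]
  map_smul' c w := by
    simp only [lp.coeFn_smul, Pi.smul_apply, smul_eq_mul, mul_left_comm _ c, mul_smul,
      Finset.smul_sum, RingHom.id_apply]

lemma continuous_multiplierMap {E : Type*} [NormedAddCommGroup E] [NormedSpace ℂ E]
    (v : X → E) (F : Finset X) (a : X → ℂ) : Continuous (multiplierMap v F a) :=
  continuous_finsetSum F fun i _ => (continuous_const.mul ((continuous_apply i).comp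
    lp.uniformContinuous_coe.continuous)).smul continuous_const

lemma exists_norm_sum_mul_smul_le {ι : Type*} {E : ι → Type*} [∀ t, NormedAddCommGroup (E t)]
    [∀ t, NormedSpace ℂ (E t)] (v : ∀ t, X → E t)
    (h : ∀ w : X → ℂ, (∃ C, ∀ i, ‖w i‖ ≤ C) → ∃ B : ℝ, ∀ t (F : Finset X) (a : X → ℂ),
      ‖∑ i ∈ F, (a i * w i) • v t i‖ ≤ B * ‖∑ i ∈ F, a i • v t i‖) :
    ∃ B > (0 : ℝ), ∀ w : X → ℂ, (∀ i, ‖w i‖ ≤ 1) → ∀ t (F : Finset X) (a : X → ℂ),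
      ‖∑ i ∈ F, (a i * w i) • v t i‖ ≤ B * ‖∑ i ∈ F, a i • v t i‖ := by
  -- Uniform boundedness is applied to the seminorms divided by `‖∑ aᵢ vᵢ‖`, which is harmless
  -- where that norm vanishes, since the seminorm then vanishes as well.
  let p (s : ι × Finset X × (X → ℂ)) : Seminorm ℂ (lp (fun _ : X => ℂ) ⊤) :=
    ‖∑ i ∈ s.2.1, s.2.2 i • v s.1 i‖₊⁻¹ •
      (normSeminorm ℂ (E s.1)).comp (multiplierMap (v s.1) s.2.1 s.2.2)
  have p_apply (s) (w) : p s w =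
      ‖∑ i ∈ s.2.1, s.2.2 i • v s.1 i‖⁻¹ * ‖∑ i ∈ s.2.1, (s.2.2 i * w i) • v s.1 i‖ := rfl
  have exists_le (w : lp (fun _ : X => ℂ) ⊤) :=
    h w ⟨‖w‖, lp.norm_apply_le_norm ENNReal.top_ne_zero w⟩
  have continuous_p (s) : Continuous (p s) :=
    (continuous_multiplierMap (v s.1) s.2.1 s.2.2).norm.const_smul _
  have bdd (w) : BddAbove (Set.range fun s => p s w) := by
    obtain ⟨B, hB⟩ := exists_le w
    refine ⟨max B 0, Set.forall_mem_range.2 fun s => ?_⟩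
    rw [p_apply, inv_mul_eq_div]
    refine div_le_of_le_mul₀ (norm_nonneg _) (le_max_right _ _) ((hB s.1 s.2.1 s.2.2).trans ?_)
    gcongr
    exact le_max_left _ _
  obtain ⟨C, hC, p_le⟩ := exists_seminorm_le_mul_norm continuous_p bdd
  refine ⟨C, hC, fun w norm_w t F a => ?_⟩
  let w' : lp (fun _ : X => ℂ) ⊤ := ⟨w, memℓp_infty ⟨1, Set.forall_mem_range.2 norm_w⟩⟩
  obtain h0 | hpos := (norm_nonneg (∑ i ∈ F, a i • v t i)).eq_or_lt
  · obtain ⟨B, hB⟩ := exists_le w'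
    simpa [← h0] using hB t F a
  · have := (p_le (t, F, a) w').trans
      (mul_le_of_le_one_right hC.le (lp.norm_le_of_forall_le zero_le_one norm_w))
    rwa [p_apply, inv_mul_le_iff₀ hpos, mul_comm] at this

end UniformBoundedness

section RandomSigns

variable {ι : Type*} [DecidableEq ι] {E : Type*} [NormedAddCommGroup E] [InnerProductSpace ℂ E]

/-- The sign function equal to `1` on `T` and to `-1` off `T`. -/
def signOn (T : Finset ι) (i : ι) : ℂ :=
  if i ∈ T then 1 else -1

lemma norm_signOn (T : Finset ι) (i : ι) : ‖signOn T i‖ = 1 := by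
  unfold signOn
  split_ifs <;> simp

lemma signOn_mul_self (T : Finset ι) (i : ι) : signOn T i * signOn T i = 1 := by
  unfold signOn
  split_ifs <;> simp

lemma sum_powerset_norm_sum_signOn_sq (u : ι → E) (F : Finset ι) :
    ∑ T ∈ F.powerset, ‖∑ i ∈ F, signOn T i • u i‖ ^ 2 = 2 ^ #F * ∑ i ∈ F, ‖u i‖ ^ 2 := by
  induction F using Finset.induction_on with
  | empty => simp
  | insert x F hx ih =>
    have parallelogram (T : Finset ι) (hT : T ∈ F.powerset) :
        ‖∑ i ∈ insert x F, signOn T i • u i‖ ^ 2 +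
            ‖∑ i ∈ insert x F, signOn (insert x T) i • u i‖ ^ 2 =
          2 * ‖u x‖ ^ 2 + 2 * ‖∑ i ∈ F, signOn T i • u i‖ ^ 2 := by
      have hxT : x ∉ T := fun h => hx (Finset.mem_powerset.1 hT h)
      have signOn_x : signOn T x = -1 := if_neg hxT
      have signOn_insert_x : signOn (insert x T) x = 1 := if_pos (Finset.mem_insert_self x T)
      have sum_insert : ∑ i ∈ F, signOn (insert x T) i • u i = ∑ i ∈ F, signOn T i • u i :=
        Finset.sum_congr rfl fun i hi => by
          simp [signOn, ne_of_mem_of_not_mem hi hx]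
      have := parallelogram_law_with_norm ℂ (∑ i ∈ F, signOn T i • u i) (u x)
      rw [Finset.sum_insert hx, Finset.sum_insert hx, sum_insert, signOn_x, signOn_insert_x,
        neg_smul, one_smul, neg_add_eq_sub, add_comm (u x)]
      linear_combination this
    rw [Finset.sum_powerset_insert hx, ← Finset.sum_add_distrib,
      Finset.sum_congr rfl parallelogram, Finset.sum_add_distrib, Finset.sum_const,
      ← Finset.mul_sum, ih, Finset.card_powerset, Finset.card_insert_of_notMem hx,
      Finset.sum_insert hx, nsmul_eq_mul]
    push_cast
    ring

lemma sum_norm_sq_le_of_forall_norm_sum_signOn_le {u : ι → E} {F : Finset ι} {r : ℝ}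
    (h : ∀ T, ‖∑ i ∈ F, signOn T i • u i‖ ≤ r) : ∑ i ∈ F, ‖u i‖ ^ 2 ≤ r ^ 2 := by
  have := Finset.sum_le_sum fun T (_ : T ∈ F.powerset) => pow_le_pow_left₀ (norm_nonneg _) (h T) 2
  rw [sum_powerset_norm_sum_signOn_sq, Finset.sum_const, Finset.card_powerset, nsmul_eq_mul] at this
  push_cast at this
  exact le_of_mul_le_mul_left this (by positivity)

lemma sq_le_sum_norm_sq_of_forall_le_norm_sum_signOn {u : ι → E} {F : Finset ι} {r : ℝ}
    (hr : 0 ≤ r) (h : ∀ T, r ≤ ‖∑ i ∈ F, signOn T i • u i‖) : r ^ 2 ≤ ∑ i ∈ F, ‖u i‖ ^ 2 := by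
  have := Finset.sum_le_sum fun T (_ : T ∈ F.powerset) => pow_le_pow_left₀ hr (h T) 2
  rw [sum_powerset_norm_sum_signOn_sq, Finset.sum_const, Finset.card_powerset, nsmul_eq_mul] at this
  push_cast at this
  exact le_of_mul_le_mul_left this (by positivity)

lemma sum_norm_sq_equiv_of_signOn {v : ι → E} {F : Finset ι} {B : ℝ} (hB : 0 < B)
    (h : ∀ T (a : ι → ℂ),
      ‖∑ i ∈ F, (a i * signOn T i) • v i‖ ≤ B * ‖∑ i ∈ F, a i • v i‖)
    (a : ι → ℂ) :
    ∑ i ∈ F, ‖a i • v i‖ ^ 2 ≤ B ^ 2 * ‖∑ i ∈ F, a i • v i‖ ^ 2 ∧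
      ‖∑ i ∈ F, a i • v i‖ ^ 2 ≤ B ^ 2 * ∑ i ∈ F, ‖a i • v i‖ ^ 2 := by
  have signOn_smul (T : Finset ι) (i : ι) : signOn T i • a i • v i = (a i * signOn T i) • v i := by
    rw [smul_smul, mul_comm]
  constructor
  · rw [← mul_pow]
    refine sum_norm_sq_le_of_forall_norm_sum_signOn_le fun T => ?_
    simpa only [signOn_smul] using h T a
  · rw [← div_le_iff₀' (by positivity), ← div_pow]
    refine sq_le_sum_norm_sq_of_forall_le_norm_sum_signOn (by positivity) fun T => ?_
    rw [div_le_iff₀' hB]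
    simpa only [signOn_smul, mul_assoc, signOn_mul_self, mul_one] using
      h T fun i => a i * signOn T i

end RandomSigns

section Necessity

variable {X : Type*} {lam : X → ℂ × ℂ}

lemma IsInterpolating.exists_grammiansBounded (h : IsInterpolating lam)
    (hlam : ∀ i, lam i ∈ Bidisk) : ∃ M > (0 : ℝ), ∃ N > (0 : ℝ), GrammiansBounded lam M N := by
  classical
  choose E _ _ _ v hv using fun K : {K // IsAdmissibleMatrix lam K} =>
    exists_inner_eq_of_posSemidef (K.2.posSemidef hlam)
  obtain ⟨B, hB, norm_le⟩ := exists_norm_sum_mul_smul_le v fun w hw => by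
    obtain ⟨φ, hφ, ⟨C, norm_φ⟩, φ_lam⟩ := h w hw
    refine ⟨C, fun K F a => ?_⟩
    simp only [← φ_lam]
    exact IsAdmissibleMatrix.norm_sum_smul_le K.2 hlam hφ norm_φ (hv K) F a
  refine ⟨B ^ 2, by positivity, B ^ 2, by positivity, fun k hk k_pos F a => ?_⟩
  let K : {K // IsAdmissibleMatrix lam K} := ⟨_, hk.isAdmissibleMatrix hlam⟩
  have re_diag (i : X) : (k (lam i) (lam i)).re = ‖v K i‖ ^ 2 := by
    rw [← inner_self_eq_norm_sq (𝕜 := ℂ), hv]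
    rfl
  have norm_sq_smul (i : X) : ‖(a i / (√(k (lam i) (lam i)).re : ℂ)) • v K i‖ ^ 2 = ‖a i‖ ^ 2 := by
    have v_ne : ‖v K i‖ ≠ 0 := fun h0 => by
      have := (Complex.pos_iff.1 (k_pos i)).1
      simp [re_diag, h0] at this
    rw [re_diag, Real.sqrt_sq (norm_nonneg _), norm_smul, norm_div, Complex.norm_real, norm_norm,
      div_mul_cancel₀ _ v_ne]
  have form_eq : normalizedForm (of fun i j => k (lam i) (lam j)) F a =
      ((‖∑ i ∈ F, (a i / (√(k (lam i) (lam i)).re : ℂ)) • v K i‖ ^ 2 : ℝ) : ℂ) := by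
    rw [normalizedForm_eq fun i => (k_pos i).le, norm_sum_smul_sq]
    simp only [hv]
    rfl
  obtain ⟨lower, upper⟩ := sum_norm_sq_equiv_of_signOn hB
    (fun T b => norm_le (signOn T) (fun i => (norm_signOn T i).le) K F b)
    fun i => a i / (√(k (lam i) (lam i)).re : ℂ)
  simp only [norm_sq_smul] at lower upper
  rw [form_eq, Complex.real_le_real, Complex.real_le_real, one_div,
    inv_mul_le_iff₀ (by positivity)]
  exact ⟨lower, upper⟩

end Necessity

theorem interpolating_iff_grammians_bounded_general {X : Type*} (lam : X → ℂ × ℂ)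
    (hlam : ∀ i, lam i ∈ Bidisk) :
    IsInterpolating lam ↔ ∃ M > (0 : ℝ), ∃ N > (0 : ℝ), GrammiansBounded lam M N :=
  ⟨fun h => h.exists_grammiansBounded hlam,
    fun ⟨_, hM, _, hN, h⟩ => h.isInterpolating hlam hM.le hN⟩

/-- **Interpolating sequences for `H^∞(𝔻²)` (Agler–McCarthy).** A sequence of distinct
points of `𝔻²` is interpolating if and only if the normalized Grammians of all admissible
kernels are uniformly bounded above and uniformly bounded below. -/
theorem interpolating_iff_grammians_bounded (lam : ℕ → ℂ × ℂ)
    (hlam : ∀ i, lam i ∈ Bidisk) (hdist : Function.Injective lam) :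
    (∀ w : ℕ → ℂ, (∃ Cw : ℝ, ∀ i, ‖w i‖ ≤ Cw) →
      ∃ φ : ℂ × ℂ → ℂ, DifferentiableOn ℂ φ Bidisk ∧
        (∃ Cφ : ℝ, ∀ z ∈ Bidisk, ‖φ z‖ ≤ Cφ) ∧
        ∀ i, φ (lam i) = w i) ↔
    ∃ M > (0:ℝ), ∃ Nc > (0:ℝ),
      ∀ k : ℂ × ℂ → ℂ × ℂ → ℂ, IsAdmissibleKernel k → (∀ i, 0 < k (lam i) (lam i)) →
        ∀ (F : Finset ℕ) (a : ℕ → ℂ),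
          ((((1 / Nc) * ∑ i ∈ F, ‖a i‖ ^ 2 : ℝ) : ℂ) ≤
              ∑ i ∈ F, ∑ j ∈ F, a i * starRingEnd ℂ (a j) *
                (k (lam i) (lam j) /
                  (Real.sqrt ((k (lam i) (lam i)).re * (k (lam j) (lam j)).re) : ℂ))) ∧
          (∑ i ∈ F, ∑ j ∈ F, a i * starRingEnd ℂ (a j) *
              (k (lam i) (lam j) /
                (Real.sqrt ((k (lam i) (lam i)).re * (k (lam j) (lam j)).re) : ℂ)) ≤
            ((M * ∑ i ∈ F, ‖a i‖ ^ 2 : ℝ) : ℂ)) :=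
  interpolating_iff_grammians_bounded_general lam hlam
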